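/- arXiv:1711.04588 — 6 statements merged into one kernel-verified Lean document; each statement's English description precedes it below -/
import Mathlib

section
/- There exists a constant C > 0 such that for every integer n ≥ 3, |π(R_n) − 2n · (1 + (log 2)/(log n) − (log 2 · log log n − (log 2)² − log 2)/(log n)² + log 2 · (log log n)²/(log n)³)| ≤ C · 2n · (log log n)/(log n)³. -/
/-!
The asymptotic rests on a form of the prime number theorem with an error term saving four
logarithms, proved here from scratch, followed by a computation special to Ramanujan primes.

*Prime number theorem.* A telescoped series continues `(s - 1) ζ(s)` to `Re s > 0` and bounds `ζ`
and `ζ'` by a small power of `|Im s|` near `Re s = 1` (`zeta_growth`, `deriv_zeta_growth`). With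
the 3-4-1 inequality this gives a zero-free region of width `|Im s| ^ (-1 / 16)` in which the
continuation of `∑ (Λ(n) - 1) n⁻ˢ` is holomorphic of moderate growth (`errorSeries_bound`).
Subtracting `ζ` removes the pole at `1`, so no residue appears when the contour of a Perron
integral with the absolutely convergent weight `1 - n / x` is shifted into that region
(`smoothed_pnt`). The convexity of the first Riesz mean of `Λ` removes the weight
(`psi_asymptotic_large`), and partial summation yields
`π(x) = x / L + x / L ^ 2 + 2 x / L ^ 3 + O(x / L ^ 4)` with `L = log x` (`primePi_asymptotic`).

*Ramanujan primes.* At `R = R_n` one has exactly `π(R) - π(R / 2) = n`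
(`primePi_ramanujanPrime`). Dividing the expansions of `π(R)` and `π(R) - π(R / 2)` gives
`π(R) = 2 n (1 + log 2 / L + (2 (log 2) ^ 2 + log 2) / L ^ 2) + O(R / L ^ 4)` with `L = log R`
(`primePi_sub_half`). Finally `2 n = R / L * (1 + O(1 / L))` determines
`L = log n + log log n + log 2 + O(log log n / log n)` (`log_ramanujan_aux`), and inserting this
into the powers of `1 / L` produces the stated terms (`change_of_scale`).
-/

open Real

/-- The number of primes not exceeding the real number `x`. -/
noncomputable def primePi (x : ℝ) : ℕ := Nat.primeCounting ⌊x⌋₊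

/-- The `n`-th Ramanujan prime: the smallest positive integer `R` such that
`π(x) - π(x/2) ≥ n` for every real `x ≥ R`. -/
noncomputable def ramanujanPrime (n : ℕ) : ℕ :=
  sInf {R : ℕ | 0 < R ∧ ∀ x : ℝ, (R : ℝ) ≤ x → primePi (x / 2) + n ≤ primePi x}

/-- The `k`-th prime number, with `nthPrime 1 = 2`, `nthPrime 2 = 3`, ... -/
noncomputable def nthPrime (k : ℕ) : ℕ := Nat.nth Nat.Prime (k - 1)

/-! ### A series for `(s - 1) * ζ(s)` in the half-plane `Re s > 0` -/

/-- The terms of a telescoped series for `(s - 1) ζ(s)`. With `m = n + 1` the term is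
`(s - 1) (m⁻ˢ - ∫ x in m..m+1, x⁻ˢ)`, of size `O(m ^ (-Re s - 1))`, so that the series converges
for `Re s > 0`. -/
noncomputable def zetaTerm (n : ℕ) (s : ℂ) : ℂ :=
  (s - 1) * ((n + 1 : ℝ) : ℂ) ^ (-s) + ((n + 2 : ℝ) : ℂ) ^ (1 - s) - ((n + 1 : ℝ) : ℂ) ^ (1 - s)

lemma norm_cpow_neg_sub_le {s : ℂ} (hs : 0 < s.re) {m x : ℝ} (hm : 0 < m) (hx : x ∈ Set.Icc m (m + 1)) :
    ‖(x : ℂ) ^ (-s) - (m : ℂ) ^ (-s)‖ ≤ ‖s‖ * m ^ (-s.re - 1) := by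
  have hs0 : -s ≠ 0 := by
    intro h; rw [neg_eq_zero] at h; simp [h] at hs
  have key := Convex.norm_image_sub_le_of_norm_hasDerivWithin_le (𝕜 := ℝ)
    (f := fun y : ℝ => (y : ℂ) ^ (-s)) (f' := fun y : ℝ => -s * (y : ℂ) ^ (-s - 1))
    (s := Set.Icc m (m + 1)) (x := m) (y := x) (C := ‖s‖ * m ^ (-s.re - 1))
    (fun y hy => (hasDerivAt_ofReal_cpow_const (by linarith [hy.1]) hs0).hasDerivWithinAt)
    (fun y hy => by
      have hy0 : 0 < y := by linarith [hy.1]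
      rw [norm_mul, norm_neg, Complex.norm_cpow_eq_rpow_re_of_pos hy0]
      simp only [Complex.sub_re, Complex.neg_re, Complex.one_re]
      gcongr ‖s‖ * ?_
      exact Real.rpow_le_rpow_of_nonpos hm hy.1 (by linarith))
    (convex_Icc _ _) (by simp) hx
  refine key.trans ?_
  have : ‖x - m‖ ≤ 1 := by
    rw [Real.norm_eq_abs, abs_le]; constructor <;> linarith [hx.1, hx.2]
  calc _ ≤ ‖s‖ * m ^ (-s.re - 1) * 1 := by gcongr
    _ = _ := mul_one _

/-- The mean value inequality applied to `y ↦ (s - 1) m⁻ˢ y + y¹⁻ˢ`, whose derivative is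
`(s - 1) (m⁻ˢ - y⁻ˢ)`. -/
lemma norm_zetaTerm_le (n : ℕ) {s : ℂ} (hs : 0 < s.re) :
    ‖zetaTerm n s‖ ≤ ‖s - 1‖ * (‖s‖ * ((n : ℝ) + 1) ^ (-s.re - 1)) := by
  rcases eq_or_ne s 1 with rfl | h1
  · simp [zetaTerm]
  have hm : (0 : ℝ) < n + 1 := by positivity
  have hr : 1 - s ≠ 0 := sub_ne_zero.mpr (Ne.symm h1)
  have key := Convex.norm_image_sub_le_of_norm_hasDerivWithin_le (𝕜 := ℝ)
    (f := fun y : ℝ => (s - 1) * ((n + 1 : ℝ) : ℂ) ^ (-s) * (y : ℂ) + (y : ℂ) ^ (1 - s))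
    (f' := fun y : ℝ => (s - 1) * ((n + 1 : ℝ) : ℂ) ^ (-s) * 1 + (1 - s) * (y : ℂ) ^ (1 - s - 1))
    (s := Set.Icc (n + 1 : ℝ) (n + 1 + 1)) (x := n + 1) (y := n + 1 + 1)
    (C := ‖s - 1‖ * (‖s‖ * ((n : ℝ) + 1) ^ (-s.re - 1)))
    (fun y hy => (((Complex.ofRealCLM.hasDerivAt (x := y)).const_mul _).add
      (hasDerivAt_ofReal_cpow_const (by linarith [hy.1]) hr)).hasDerivWithinAt)
    (fun y hy => by
      have : (s - 1) * ((n + 1 : ℝ) : ℂ) ^ (-s) * 1 + (1 - s) * (y : ℂ) ^ (1 - s - 1)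
          = -((s - 1) * ((y : ℂ) ^ (-s) - ((n + 1 : ℝ) : ℂ) ^ (-s))) := by
        rw [show 1 - s - 1 = -s by ring]; ring
      rw [this, norm_neg, norm_mul]
      gcongr
      exact norm_cpow_neg_sub_le hs hm hy)
    (convex_Icc _ _) (by simp) (by simp)
  have e : zetaTerm n s = ((s - 1) * ((n + 1 : ℝ) : ℂ) ^ (-s) * ((n + 1 + 1 : ℝ) : ℂ) + ((n + 1 + 1 : ℝ) : ℂ) ^ (1 - s))
      - ((s - 1) * ((n + 1 : ℝ) : ℂ) ^ (-s) * ((n + 1 : ℝ) : ℂ) + ((n + 1 : ℝ) : ℂ) ^ (1 - s)) := by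
    rw [zetaTerm, show (n + 2 : ℝ) = n + 1 + 1 by ring]
    push_cast
    ring
  rw [e]
  refine key.trans (le_of_eq ?_)
  simp

lemma summable_nat_succ_rpow {a : ℝ} (ha : a < -1) : Summable fun n : ℕ => ((n : ℝ) + 1) ^ a := by
  have := (summable_nat_add_iff 1).mpr (Real.summable_nat_rpow.mpr ha)
  simpa using this

lemma summable_zetaTerm {s : ℂ} (hs : 0 < s.re) : Summable fun n => zetaTerm n s :=
  .of_norm_bounded
    (((summable_nat_succ_rpow (by linarith : -s.re - 1 < -1)).mul_left _).mul_left _)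
    (fun n => norm_zetaTerm_le n hs)

lemma sum_zetaTerm (N : ℕ) (s : ℂ) :
    ∑ n ∈ Finset.range N, zetaTerm n s =
      (s - 1) * ∑ n ∈ Finset.range N, ((n + 1 : ℝ) : ℂ) ^ (-s) + ((N + 1 : ℝ) : ℂ) ^ (1 - s) - 1 := by
  induction N with
  | zero => simp
  | succ N ih =>
    rw [Finset.sum_range_succ, ih, Finset.sum_range_succ, zetaTerm,
      show ((N + 1 : ℕ) + 1 : ℝ) = N + 2 by push_cast; ring]
    ring

lemma tsum_zetaTerm_of_one_lt {s : ℂ} (hs : 1 < s.re) :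
    1 + ∑' n, zetaTerm n s = riemannZeta₁ s := by
  have h1 : s ≠ 1 := by rintro rfl; simp at hs
  have hsum : Summable fun n : ℕ => ((n + 1 : ℝ) : ℂ) ^ (-s) := by
    refine .of_norm_bounded (summable_nat_succ_rpow (by linarith : -s.re < -1)) fun n => ?_
    rw [Complex.norm_cpow_eq_rpow_re_of_pos (by positivity)]; simp
  have hz : riemannZeta s = ∑' n : ℕ, ((n + 1 : ℝ) : ℂ) ^ (-s) := by
    rw [zeta_eq_tsum_one_div_nat_add_one_cpow hs]
    refine tsum_congr fun n => ?_
    rw [Complex.cpow_neg, one_div]; push_cast; rfl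
  have l1 := (summable_zetaTerm (by linarith : 0 < s.re)).hasSum.tendsto_sum_nat
  have l2 : Filter.Tendsto (fun N : ℕ => ((N + 1 : ℝ) : ℂ) ^ (1 - s)) Filter.atTop (nhds 0) := by
    rw [tendsto_zero_iff_norm_tendsto_zero]
    have : Filter.Tendsto (fun N : ℕ => ((N : ℝ) + 1) ^ (-(s.re - 1))) Filter.atTop (nhds 0) :=
      (tendsto_rpow_neg_atTop (by linarith)).comp
        (Filter.tendsto_atTop_add_const_right _ _ tendsto_natCast_atTop_atTop)
    refine this.congr fun N => ?_
    rw [Complex.norm_cpow_eq_rpow_re_of_pos (by positivity)]; simp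
  have l3 := ((hsum.hasSum.tendsto_sum_nat.const_mul (s - 1)).add l2).sub_const 1
  have := tendsto_nhds_unique l1 (l3.congr fun N => (sum_zetaTerm N s).symm)
  rw [this, ← hz, riemannZeta_eq_inv_sub_mul h1]
  field_simp [sub_ne_zero.mpr h1]
  ring

lemma differentiable_zetaTerm (n : ℕ) : Differentiable ℂ (zetaTerm n) := by
  have h1 : ((n + 1 : ℝ) : ℂ) ≠ 0 := by exact_mod_cast (by positivity : (n + 1 : ℝ) ≠ 0)
  have h2 : ((n + 2 : ℝ) : ℂ) ≠ 0 := by exact_mod_cast (by positivity : (n + 2 : ℝ) ≠ 0)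
  intro s
  unfold zetaTerm
  have a1 : DifferentiableAt ℂ (fun s : ℂ => ((n + 1 : ℝ) : ℂ) ^ (-s)) s :=
    (differentiableAt_id.neg).const_cpow (.inl h1)
  have a2 : DifferentiableAt ℂ (fun s : ℂ => ((n + 2 : ℝ) : ℂ) ^ (1 - s)) s :=
    (differentiableAt_id.const_sub 1).const_cpow (.inl h2)
  have a3 : DifferentiableAt ℂ (fun s : ℂ => ((n + 1 : ℝ) : ℂ) ^ (1 - s)) s :=
    (differentiableAt_id.const_sub 1).const_cpow (.inl h1)
  exact (((differentiableAt_id.sub_const 1).mul a1).add a2).sub a3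

/-- `riemannZeta₁ s` is `(s - 1) ζ(s)`. The identity extends from `Re s > 1` by analytic
continuation. -/
lemma tsum_zetaTerm {s : ℂ} (hs : 0 < s.re) : 1 + ∑' n, zetaTerm n s = riemannZeta₁ s := by
  -- a bounded convex open set containing both `s` and `2`
  set d := min s.re 1 / 2 with hd
  have hd0 : 0 < d := by positivity
  set R := ‖s‖ + 3
  let U : Set ℂ := {z | d < z.re} ∩ Metric.ball 0 R
  have hU : IsOpen U := (isOpen_lt continuous_const Complex.continuous_re).inter Metric.isOpen_ball
  have hUc : Convex ℝ U := (convex_halfSpace_re_gt d).inter (convex_ball 0 R)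
  have hdiff : DifferentiableOn ℂ (fun z => ∑' n, zetaTerm n z) U := by
    refine Complex.differentiableOn_tsum_of_summable_norm
      (u := fun n : ℕ => (R + 1) * (R * ((n : ℝ) + 1) ^ (-d - 1)))
      (((summable_nat_succ_rpow (by linarith)).mul_left _).mul_left _)
      (fun n => (differentiable_zetaTerm n).differentiableOn) hU ?_
    rintro n w ⟨hw1, hw2⟩
    have hw1 : d < w.re := hw1
    have hw3 : ‖w‖ ≤ R := by simpa using (Metric.mem_ball.mp hw2).le
    refine (norm_zetaTerm_le n (hd0.trans hw1)).trans ?_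
    have : ‖w - 1‖ ≤ R + 1 := (norm_sub_le _ _).trans (by simpa using hw3)
    gcongr
    linarith
  have h1 : AnalyticOnNhd ℂ (fun z => 1 + ∑' n, zetaTerm n z) U :=
    (hdiff.const_add 1).analyticOnNhd hU
  have h2 : AnalyticOnNhd ℂ riemannZeta₁ U :=
    differentiable_riemannZeta₁.differentiableOn.analyticOnNhd hU
  have hmem2 : (2 : ℂ) ∈ U := by
    constructor
    · have : min s.re 1 ≤ 1 := min_le_right _ _
      change d < (2 : ℂ).re
      simp; linarith
    · simp [R]; linarith [norm_nonneg s]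
  have hmems : s ∈ U := by
    constructor
    · have : min s.re 1 ≤ s.re := min_le_left _ _
      change d < s.re
      linarith
    · simp [R]
  refine h1.eqOn_of_preconnected_of_eventuallyEq h2 hUc.isPreconnected hmem2 ?_ hmems
  filter_upwards [(isOpen_lt continuous_const Complex.continuous_re).mem_nhds
    (show (1 : ℝ) < (2 : ℂ).re by simp)] with z hz
  exact tsum_zetaTerm_of_one_lt hz

/-! ### Growth of `ζ` and `ζ'` slightly to the left of `Re s = 1` -/

/-- An arbitrarily small power of `|Im s|` bounds `ζ` if the strip is thin enough; the exponent
`1 / 80` is small enough for the later use of a region of width `|Im s| ^ (-1 / 16)`. -/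
lemma zeta_growth : ∃ C : ℝ, 0 < C ∧ ∀ s : ℂ, 1 - 1 / 160 ≤ s.re → s.re ≤ 3 → 1 ≤ |s.im| →
    ‖riemannZeta s‖ ≤ C * |s.im| ^ (1 / 80 : ℝ) := by
  set u : ℕ → ℝ := fun n => ((n : ℝ) + 1) ^ (-1 - 1 / 160 : ℝ) with hu
  have hus : Summable u := summable_nat_succ_rpow (by norm_num)
  have hu0 : ∀ n, 0 ≤ u n := fun n => by positivity
  set K : ℝ := ∑' n, u n with hK
  have hK0 : 0 ≤ K := tsum_nonneg hu0
  refine ⟨2 * (K + 2 + 4 * K), by positivity, fun s hs1 hs3 ht => ?_⟩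
  set t := |s.im| with ht_def
  set N : ℕ := ⌊t⌋₊ + 1 with hN
  have hNt : t ≤ N := by rw [hN]; push_cast; exact (Nat.lt_floor_add_one t).le
  have hN2 : (N : ℝ) ≤ 2 * t := by
    rw [hN]; push_cast; linarith [Nat.floor_le (by linarith : 0 ≤ t)]
  have hN1 : (1 : ℝ) ≤ N := by linarith
  have hN0 : (0 : ℝ) < N := by linarith
  have hpos : 0 < s.re := by linarith
  have hne : s ≠ 1 := by
    rintro rfl; simp at ht_def; linarith
  have hs1n : t ≤ ‖s - 1‖ := by
    have := Complex.abs_im_le_norm (s - 1); simpa using this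
  have hsn : ‖s‖ ≤ 4 * N := by
    have := Complex.norm_le_abs_re_add_abs_im s
    rw [abs_of_pos hpos] at this
    linarith
  have hs1pos : 0 < ‖s - 1‖ := by linarith
  -- the sum of the first `N` terms
  have head : ‖∑ n ∈ Finset.range N, ((n + 1 : ℝ) : ℂ) ^ (-s)‖ ≤ (N : ℝ) ^ (1 / 80 : ℝ) * K := by
    calc _ ≤ ∑ n ∈ Finset.range N, ‖((n + 1 : ℝ) : ℂ) ^ (-s)‖ := norm_sum_le _ _
      _ ≤ ∑ n ∈ Finset.range N, (N : ℝ) ^ (1 / 80 : ℝ) * u n := by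
        refine Finset.sum_le_sum fun n hn => ?_
        have hn1 : ((n : ℝ) + 1) ≤ N := by exact_mod_cast Finset.mem_range.mp hn
        rw [Complex.norm_cpow_eq_rpow_re_of_pos (by positivity)]
        calc ((n : ℝ) + 1) ^ (-s).re ≤ ((n : ℝ) + 1) ^ (1 / 80 + (-1 - 1 / 160) : ℝ) :=
              Real.rpow_le_rpow_of_exponent_le (by linarith [Nat.cast_nonneg (α := ℝ) n])
                (by simp; linarith)
          _ = ((n : ℝ) + 1) ^ (1 / 80 : ℝ) * u n := Real.rpow_add (by positivity) _ _
          _ ≤ _ := by gcongr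
      _ = (N : ℝ) ^ (1 / 80 : ℝ) * ∑ n ∈ Finset.range N, u n := by rw [Finset.mul_sum]
      _ ≤ _ := by
        gcongr
        exact hus.sum_le_tsum _ fun n _ => hu0 n
  -- the tail of the series
  have tail : ‖∑' n, zetaTerm (n + N) s‖ ≤
      ‖s - 1‖ * (‖s‖ * ((N : ℝ) ^ (-1 + 1 / 80 : ℝ) * K)) := by
    refine tsum_of_norm_bounded
      (((hus.hasSum.mul_left ((N : ℝ) ^ (-1 + 1 / 80 : ℝ))).mul_left ‖s‖).mul_left ‖s - 1‖) fun n => ?_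
    refine (norm_zetaTerm_le _ hpos).trans ?_
    gcongr
    have hn0 : (0 : ℝ) ≤ n := Nat.cast_nonneg n
    calc (((n + N : ℕ) : ℝ) + 1) ^ (-s.re - 1)
        ≤ (((n + N : ℕ) : ℝ) + 1) ^ ((-1 + 1 / 80) + (-1 - 1 / 160) : ℝ) :=
          Real.rpow_le_rpow_of_exponent_le (by push_cast; linarith) (by linarith)
      _ = (((n + N : ℕ) : ℝ) + 1) ^ (-1 + 1 / 80 : ℝ) * (((n + N : ℕ) : ℝ) + 1) ^ (-1 - 1 / 160 : ℝ) :=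
          Real.rpow_add (by positivity) _ _
      _ ≤ _ := by
        gcongr ?_ * ?_
        · exact Real.rpow_le_rpow_of_nonpos hN0 (by push_cast; linarith) (by norm_num)
        · exact Real.rpow_le_rpow_of_nonpos (by positivity) (by push_cast; linarith) (by norm_num)
  have mid : ‖((N + 1 : ℝ) : ℂ) ^ (1 - s)‖ ≤ 2 * (N : ℝ) ^ (1 / 80 : ℝ) := by
    rw [Complex.norm_cpow_eq_rpow_re_of_pos (by positivity)]
    calc ((N : ℝ) + 1) ^ (1 - s).re ≤ ((N : ℝ) + 1) ^ (1 / 80 : ℝ) :=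
          Real.rpow_le_rpow_of_exponent_le (by linarith) (by simp; linarith)
      _ ≤ (2 * (N : ℝ)) ^ (1 / 80 : ℝ) := by gcongr; linarith
      _ = 2 ^ (1 / 80 : ℝ) * (N : ℝ) ^ (1 / 80 : ℝ) := Real.mul_rpow (by norm_num) hN0.le
      _ ≤ 2 ^ (1 : ℝ) * (N : ℝ) ^ (1 / 80 : ℝ) := by gcongr <;> norm_num
      _ = _ := by rw [Real.rpow_one]
  have hsplit : riemannZeta₁ s = (s - 1) * ∑ n ∈ Finset.range N, ((n + 1 : ℝ) : ℂ) ^ (-s)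
      + ((N + 1 : ℝ) : ℂ) ^ (1 - s) + ∑' n, zetaTerm (n + N) s := by
    rw [← tsum_zetaTerm hpos, ← (summable_zetaTerm hpos).sum_add_tsum_nat_add N, sum_zetaTerm]
    ring
  have hNe : (N : ℝ) * (N : ℝ) ^ (-1 + 1 / 80 : ℝ) = (N : ℝ) ^ (1 / 80 : ℝ) := by
    rw [Real.rpow_add hN0, Real.rpow_neg_one]; field_simp
  set P := (N : ℝ) ^ (1 / 80 : ℝ) with hP
  have hP0 : 0 ≤ P := by positivity
  have hb : ‖riemannZeta₁ s‖ ≤ ‖s - 1‖ * ((K + 2 + 4 * K) * P) := by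
    rw [hsplit]
    calc _ ≤ ‖s - 1‖ * (P * K) + 2 * P + ‖s - 1‖ * (‖s‖ * ((N : ℝ) ^ (-1 + 1 / 80 : ℝ) * K)) := by
          refine (norm_add_le _ _).trans (add_le_add ((norm_add_le _ _).trans (add_le_add ?_ mid)) tail)
          rw [norm_mul]; gcongr
      _ ≤ ‖s - 1‖ * (P * K) + ‖s - 1‖ * (2 * P)
          + ‖s - 1‖ * (4 * N * ((N : ℝ) ^ (-1 + 1 / 80 : ℝ) * K)) := by
          refine add_le_add (add_le_add le_rfl ?_) (by gcongr)
          exact le_mul_of_one_le_left (by positivity) (by linarith)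
      _ = ‖s - 1‖ * (P * K) + ‖s - 1‖ * (2 * P)
          + ‖s - 1‖ * (4 * (N * (N : ℝ) ^ (-1 + 1 / 80 : ℝ)) * K) := by ring
      _ = _ := by rw [hNe]; ring
  have hPt : P ≤ 2 * t ^ (1 / 80 : ℝ) := by
    calc P ≤ (2 * t) ^ (1 / 80 : ℝ) := by rw [hP]; gcongr
      _ = 2 ^ (1 / 80 : ℝ) * t ^ (1 / 80 : ℝ) := Real.mul_rpow (by norm_num) (by linarith)
      _ ≤ 2 ^ (1 : ℝ) * t ^ (1 / 80 : ℝ) := by gcongr <;> norm_num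
      _ = _ := by rw [Real.rpow_one]
  rw [riemannZeta_eq_inv_sub_mul hne, norm_mul, norm_inv]
  calc ‖s - 1‖⁻¹ * ‖riemannZeta₁ s‖ ≤ ‖s - 1‖⁻¹ * (‖s - 1‖ * ((K + 2 + 4 * K) * P)) := by gcongr
    _ = (K + 2 + 4 * K) * P := by field_simp
    _ ≤ (K + 2 + 4 * K) * (2 * t ^ (1 / 80 : ℝ)) := by gcongr
    _ = _ := by ring

/-- Cauchy's estimate on circles of radius `1 / 320`. -/
lemma deriv_zeta_growth : ∃ C : ℝ, 0 < C ∧ ∀ s : ℂ, 1 - 1 / 320 ≤ s.re → s.re ≤ 2 → 2 ≤ |s.im| →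
    ‖deriv riemannZeta s‖ ≤ C * |s.im| ^ (1 / 80 : ℝ) := by
  obtain ⟨C, hC, h⟩ := zeta_growth
  refine ⟨C * 2 / (1 / 320), by positivity, fun s h1 h2 ht => ?_⟩
  have key := Complex.norm_deriv_le_of_forall_mem_sphere_norm_le (c := s) (R := 1 / 320)
    (f := riemannZeta) (C := C * (2 * |s.im| ^ (1 / 80 : ℝ))) (by norm_num) ?_ ?_
  · refine key.trans (le_of_eq ?_); ring
  · refine DifferentiableOn.diffContOnCl fun z hz => ?_
    rw [closure_ball _ (by norm_num)] at hz
    refine (differentiableAt_riemannZeta ?_).differentiableWithinAt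
    rintro rfl
    have := Complex.abs_im_le_norm (1 - s)
    rw [Metric.mem_closedBall, dist_eq_norm] at hz
    simp at this
    linarith
  · intro z hz
    rw [mem_sphere_iff_norm] at hz
    have hre := Complex.abs_re_le_norm (z - s)
    have him := Complex.abs_im_le_norm (z - s)
    rw [hz, Complex.sub_re, abs_le] at hre
    rw [hz, Complex.sub_im] at him
    have a1 : |s.im| - |z.im| ≤ 1 / 320 := by
      have := abs_sub_abs_le_abs_sub s.im z.im
      rw [abs_sub_comm] at this; linarith
    have a2 : |z.im| - |s.im| ≤ 1 / 320 := (abs_sub_abs_le_abs_sub z.im s.im).trans him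
    refine (h z (by linarith) (by linarith) (by linarith)).trans ?_
    gcongr
    calc |z.im| ^ (1 / 80 : ℝ) ≤ (2 * |s.im|) ^ (1 / 80 : ℝ) := by gcongr; linarith
      _ = 2 ^ (1 / 80 : ℝ) * |s.im| ^ (1 / 80 : ℝ) := Real.mul_rpow (by norm_num) (by positivity)
      _ ≤ 2 ^ (1 : ℝ) * |s.im| ^ (1 / 80 : ℝ) := by gcongr <;> norm_num
      _ = _ := by rw [Real.rpow_one]

/-! ### A zero-free region and the continuation of `∑ (Λ(n) - 1) n⁻ˢ` -/

lemma zeta_three_four_one {x : ℝ} (hx : 0 < x) (y : ℝ) :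
    1 ≤ ‖riemannZeta (1 + x)‖ ^ 3 * ‖riemannZeta (1 + x + Complex.I * y)‖ ^ 4 *
      ‖riemannZeta (1 + x + 2 * Complex.I * y)‖ := by
  have h := DirichletCharacter.norm_LSeries_product_ge_one (1 : DirichletCharacter ℂ 1) hx y
  rw [one_pow] at h
  rw [DirichletCharacter.LSeries_modOne_eq, LSeries_one_eq_riemannZeta (by simpa using hx),
    LSeries_one_eq_riemannZeta (by simpa using hx),
    LSeries_one_eq_riemannZeta (by simpa using hx)] at h
  simpa only [norm_mul, norm_pow] using h

/-- A lower bound for `ζ(1 + x + iy)` from the 3-4-1 inequality, the simple pole at `1` and the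
growth bound at `1 + x + 2iy`. -/
lemma zeta_lower_right : ∃ c : ℝ, 0 < c ∧ ∀ x y : ℝ, 0 < x → x ≤ 1 → 1 ≤ |y| →
    c * x ^ 3 / |y| ^ (1 / 80 : ℝ) ≤ ‖riemannZeta (1 + x + Complex.I * y)‖ ^ 4 := by
  obtain ⟨C, hC, hg⟩ := zeta_growth
  obtain ⟨M, hM⟩ := (isCompact_Icc (a := (0 : ℝ)) (b := 1)).exists_bound_of_continuousOn
    (f := fun x : ℝ => riemannZeta₁ (1 + x))
    (differentiable_riemannZeta₁.continuous.comp (by fun_prop)).continuousOn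
  have hM1 : 0 < |M| + 1 := by positivity
  refine ⟨1 / ((|M| + 1) ^ 3 * (2 * C)), by positivity, fun x y hx hx1 hy => ?_⟩
  have hy0 : 0 < |y| := by linarith
  have h1 : ‖riemannZeta (1 + x)‖ ≤ (|M| + 1) / x := by
    have hne : (1 + x : ℂ) ≠ 1 := by
      intro h; rw [add_eq_left] at h; exact hx.ne' (by exact_mod_cast h)
    rw [riemannZeta_eq_inv_sub_mul hne, norm_mul, norm_inv, add_sub_cancel_left,
      Complex.norm_of_nonneg hx.le, inv_mul_eq_div]
    gcongr
    have := hM x ⟨hx.le, hx1⟩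
    linarith [le_abs_self M]
  have h2 : ‖riemannZeta (1 + x + 2 * Complex.I * y)‖ ≤ 2 * C * |y| ^ (1 / 80 : ℝ) := by
    have e : |(1 + x + 2 * Complex.I * y : ℂ).im| = 2 * |y| := by simp [abs_mul]
    have := hg (1 + x + 2 * Complex.I * y) (by simp; linarith) (by simp; linarith)
      (by rw [e]; linarith)
    rw [e] at this
    calc _ ≤ _ := this
      _ = C * (2 ^ (1 / 80 : ℝ) * |y| ^ (1 / 80 : ℝ)) := by
        rw [Real.mul_rpow (by norm_num) hy0.le]
      _ ≤ C * (2 ^ (1 : ℝ) * |y| ^ (1 / 80 : ℝ)) := by gcongr <;> norm_num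
      _ = _ := by rw [Real.rpow_one]; ring
  have h := zeta_three_four_one hx y
  set A := ‖riemannZeta (1 + x + Complex.I * y)‖ ^ 4
  set q := |y| ^ (1 / 80 : ℝ) with hq
  have hq0 : 0 < q := by positivity
  have h3 : 1 ≤ ((|M| + 1) / x) ^ 3 * A * (2 * C * q) := by
    refine h.trans ?_
    gcongr
  calc 1 / ((|M| + 1) ^ 3 * (2 * C)) * x ^ 3 / q
      = 1 / ((|M| + 1) ^ 3 * (2 * C)) * x ^ 3 / q * 1 := by ring
    _ ≤ 1 / ((|M| + 1) ^ 3 * (2 * C)) * x ^ 3 / q * (((|M| + 1) / x) ^ 3 * A * (2 * C * q)) := by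
      gcongr
    _ = A := by field_simp

/-- The lower bound at a point at distance of order `|Im s| ^ (-1 / 16)` to the right of
`Re s = 1` is carried to the left by the bound for `ζ'`. -/
lemma zeta_lower : ∃ a b : ℝ, 0 < a ∧ a ≤ 1 / 320 ∧ 0 < b ∧ ∀ s : ℂ, 2 ≤ |s.im| →
    1 - a / (|s.im| ^ (1 / 80 : ℝ)) ^ 5 ≤ s.re → s.re ≤ 2 →
    b / (|s.im| ^ (1 / 80 : ℝ)) ^ 4 ≤ ‖riemannZeta s‖ := by
  obtain ⟨c, hc, hr⟩ := zeta_lower_right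
  obtain ⟨D, hD, hd⟩ := deriv_zeta_growth
  set a := min (c / (256 * D ^ 4)) (1 / 320) with ha
  have ha0 : 0 < a := by positivity
  have ha1 : a ≤ 1 / 320 := min_le_right _ _
  have ha2 : a * (256 * D ^ 4) ≤ c := by
    rw [← le_div_iff₀ (by positivity)]; exact min_le_left _ _
  refine ⟨a, 2 * a * D, ha0, ha1, by positivity, fun s ht h1 h2 => ?_⟩
  set q := |s.im| ^ (1 / 80 : ℝ) with hq
  have hq1 : 1 ≤ q := Real.one_le_rpow (by linarith) (by norm_num)
  have hq0 : 0 < q := by linarith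
  set X := a / q ^ 5 with hX
  have hX0 : 0 < X := by positivity
  have hXa : X ≤ a := div_le_self ha0.le (one_le_pow₀ hq1)
  have right : ∀ x : ℝ, X ≤ x → x ≤ 1 →
      4 * a * D / q ^ 4 ≤ ‖riemannZeta (1 + x + Complex.I * s.im)‖ := by
    intro x hx hx1
    have := hr x s.im (by linarith) hx1 (by linarith)
    refine le_of_pow_le_pow_left₀ (n := 4) (by norm_num) (norm_nonneg _) (le_trans ?_ this)
    calc (4 * a * D / q ^ 4) ^ 4 = a * (256 * D ^ 4) * (a ^ 3 / q ^ 16) := by field_simp; ring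
      _ ≤ c * (a ^ 3 / q ^ 16) := by gcongr
      _ = c * X ^ 3 / q := by rw [hX]; field_simp
      _ ≤ c * x ^ 3 / q := by gcongr
  rcases le_total (1 + X) s.re with h | h
  · have := right (s.re - 1) (by linarith) (by linarith)
    have e : (1 + (s.re - 1 : ℝ) + Complex.I * s.im : ℂ) = s := by
      apply Complex.ext <;> simp
    rw [e] at this
    refine le_trans ?_ this
    gcongr
    norm_num
  · have h3 := right X le_rfl (by linarith)
    set w : ℂ := 1 + X + Complex.I * s.im with hw
    have hwre : w.re = 1 + X := by simp [w]
    have hwim : w.im = s.im := by simp [w]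
    have key := Convex.norm_image_sub_le_of_norm_deriv_le (𝕜 := ℂ) (f := riemannZeta)
      (s := Set.Icc (1 - 1 / 320 : ℝ) 2 ×ℂ {s.im}) (x := w) (y := s) (C := D * q)
      (fun z hz => by
        refine differentiableAt_riemannZeta ?_
        rintro rfl
        have : (1 : ℂ).im = s.im := hz.2
        rw [← this] at ht
        simp at ht
        linarith)
      (fun z hz => by
        have hzi : z.im = s.im := hz.2
        have := hd z hz.1.1 hz.1.2 (by rw [hzi]; exact ht)
        rwa [hzi] at this)
      (((convex_Icc _ _).linear_preimage Complex.reLm).inter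
        ((convex_singleton _).linear_preimage Complex.imLm))
      ⟨⟨by rw [hwre]; linarith, by rw [hwre]; linarith⟩, hwim⟩
      ⟨⟨by linarith, h2⟩, rfl⟩
    have hsw : ‖s - w‖ ≤ 2 * X := by
      have : s - w = ((s.re - (1 + X) : ℝ) : ℂ) := by
        apply Complex.ext <;> simp [w]
      rw [this, Complex.norm_real, Real.norm_eq_abs, abs_le]
      constructor <;> linarith
    have h4 : ‖riemannZeta s - riemannZeta w‖ ≤ 2 * a * D / q ^ 4 := by
      calc _ ≤ _ := key
        _ ≤ D * q * (2 * X) := by gcongr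
        _ = _ := by rw [hX]; field_simp
    have h5 : ‖riemannZeta w‖ - ‖riemannZeta s‖ ≤ ‖riemannZeta s - riemannZeta w‖ := by
      rw [norm_sub_rev]; exact norm_sub_norm_le _ _
    have : 4 * a * D / q ^ 4 = 2 * a * D / q ^ 4 + 2 * a * D / q ^ 4 := by ring
    linarith

/-- The holomorphic continuation of `∑ (Λ(n) - 1) n⁻ˢ = -ζ'(s)/ζ(s) - ζ(s)`: the poles at `s = 1`
of the two summands cancel, which is visible when they are written in terms of
`riemannZeta₀ s = ζ(s) - 1/(s-1)` and `riemannZeta₁ s = (s-1) ζ(s)`. -/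
noncomputable def errorSeries (s : ℂ) : ℂ := -(deriv riemannZeta₁ s / riemannZeta₁ s) - riemannZeta₀ s

lemma errorSeries_eq {s : ℂ} (hs : s ≠ 1) (h0 : riemannZeta s ≠ 0) :
    errorSeries s = -deriv riemannZeta s / riemannZeta s - riemannZeta s := by
  have h1 : s - 1 ≠ 0 := sub_ne_zero.mpr hs
  have h2 : riemannZeta₁ s ≠ 0 := by
    rw [riemannZeta_eq_inv_sub_mul hs] at h0
    exact right_ne_zero_of_mul h0
  have e : riemannZeta₀ s = riemannZeta s - (s - 1)⁻¹ := by
    rw [riemannZeta_eq_inv_sub_add hs]; ring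
  rw [errorSeries, deriv_riemannZeta_eq_neg_inv_sub_sq_mul_add hs, e]
  have e2 : (-(-(s - 1)⁻¹ ^ 2 * riemannZeta₁ s + (s - 1)⁻¹ * deriv riemannZeta₁ s)) / riemannZeta s
      = (s - 1)⁻¹ - deriv riemannZeta₁ s / riemannZeta₁ s := by
    rw [riemannZeta_eq_inv_sub_mul hs]
    field_simp
    ring
  rw [e2]; ring

lemma differentiableAt_errorSeries {s : ℂ} (hs : riemannZeta₁ s ≠ 0) :
    DifferentiableAt ℂ errorSeries s := by
  unfold errorSeries
  exact (((differentiable_riemannZeta₁.deriv).differentiableAt.div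
    differentiable_riemannZeta₁.differentiableAt hs).neg).sub
      differentiable_riemannZeta₀.differentiableAt

lemma errorSeries_bound_high : ∃ a C : ℝ, 0 < a ∧ a ≤ 1 / 320 ∧ 0 < C ∧ ∀ s : ℂ, 2 ≤ |s.im| →
    1 - a / |s.im| ^ (1 / 16 : ℝ) ≤ s.re → s.re ≤ 2 →
    riemannZeta₁ s ≠ 0 ∧ ‖errorSeries s‖ ≤ C * |s.im| ^ (1 / 16 : ℝ) := by
  obtain ⟨a, b, ha, ha1, hb, hl⟩ := zeta_lower
  obtain ⟨D, hD, hd⟩ := deriv_zeta_growth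
  obtain ⟨C, hC, hg⟩ := zeta_growth
  refine ⟨a, D / b + C, ha, ha1, by positivity, fun s ht h1 h2 => ?_⟩
  have hqe : |s.im| ^ (1 / 16 : ℝ) = (|s.im| ^ (1 / 80 : ℝ)) ^ 5 := by
    rw [← Real.rpow_natCast, ← Real.rpow_mul (abs_nonneg _)]; norm_num
  rw [hqe] at h1 ⊢
  have hlow := hl s ht h1 h2
  set q := |s.im| ^ (1 / 80 : ℝ) with hq
  have hq1 : 1 ≤ q := Real.one_le_rpow (by linarith) (by norm_num)
  have hq0 : 0 < q := by linarith
  have hXa : a / q ^ 5 ≤ a := div_le_self ha.le (one_le_pow₀ hq1)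
  have hne : s ≠ 1 := by
    rintro rfl; simp at ht; linarith
  have hz : riemannZeta s ≠ 0 := by
    rw [← norm_pos_iff]; exact lt_of_lt_of_le (by positivity) hlow
  constructor
  · rw [riemannZeta_eq_inv_sub_mul hne] at hz
    exact right_ne_zero_of_mul hz
  rw [errorSeries_eq hne hz]
  have e1 := hd s (by linarith) h2 ht
  have e2 := hg s (by linarith) (by linarith) (by linarith)
  calc _ ≤ ‖deriv riemannZeta s‖ / ‖riemannZeta s‖ + ‖riemannZeta s‖ := by
        refine (norm_sub_le _ _).trans (le_of_eq ?_); rw [norm_div, norm_neg]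
    _ ≤ (D * q) / (b / q ^ 4) + C * q := by gcongr
    _ = D / b * q ^ 5 + C * q ^ 1 := by field_simp
    _ ≤ D / b * q ^ 5 + C * q ^ 5 := by
      gcongr
      norm_num
    _ = _ := by ring

/-- Near the real axis compactness is enough, as `ζ` has no zeros on `Re s ≥ 1`. -/
lemma errorSeries_bound_low : ∃ δ C : ℝ, 0 < δ ∧ 0 < C ∧ ∀ s : ℂ, |s.im| ≤ 2 →
    1 - δ ≤ s.re → s.re ≤ 2 → riemannZeta₁ s ≠ 0 ∧ ‖errorSeries s‖ ≤ C := by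
  set K : Set ℂ := Set.Icc (1 : ℝ) 2 ×ℂ Set.Icc (-2 : ℝ) 2 with hK
  have hKc : IsCompact K := isCompact_Icc.reProdIm isCompact_Icc
  set U : Set ℂ := {z | riemannZeta₁ z ≠ 0} with hU
  have hUo : IsOpen U := isOpen_ne_fun differentiable_riemannZeta₁.continuous continuous_const
  have hKU : K ⊆ U := by
    intro z hz
    rcases eq_or_ne z 1 with rfl | h1
    · simp [U]
    · have := riemannZeta_ne_zero_of_one_le_re hz.1.1
      rw [riemannZeta_eq_inv_sub_mul h1] at this
      exact right_ne_zero_of_mul this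
  obtain ⟨δ, hδ, hsub⟩ := hKc.exists_cthickening_subset_open hUo hKU
  have hcomp : IsCompact (Metric.cthickening δ K) := hKc.cthickening
  obtain ⟨C, hC⟩ := hcomp.exists_bound_of_continuousOn (f := errorSeries)
    (fun z hz => (differentiableAt_errorSeries (hsub hz)).continuousAt.continuousWithinAt)
  refine ⟨δ, |C| + 1, hδ, by positivity, fun s ht h1 h2 => ?_⟩
  have hmem : s ∈ Metric.cthickening δ K := by
    have hkm : ((max s.re 1 : ℝ) : ℂ) + s.im * Complex.I ∈ K := by
      rw [hK, Complex.mem_reProdIm]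
      rw [abs_le] at ht
      simp [h2, ht]
    refine Metric.mem_cthickening_of_dist_le s _ δ K hkm ?_
    have : s - (((max s.re 1 : ℝ) : ℂ) + s.im * Complex.I) = ((s.re - max s.re 1 : ℝ) : ℂ) := by
      apply Complex.ext <;> simp
    rw [dist_eq_norm, this, Complex.norm_real, Real.norm_eq_abs, abs_le]
    constructor
    · have : max s.re 1 ≤ s.re + δ := max_le (by linarith) (by linarith)
      linarith
    · linarith [le_max_left s.re 1]
  exact ⟨hsub hmem, (hC s hmem).trans (by linarith [le_abs_self C])⟩

/-- `errorSeries` is holomorphic of moderate growth in a region of width `|Im s| ^ (-1 / 16)` to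
the left of `Re s = 1`. -/
lemma errorSeries_bound : ∃ a C : ℝ, 0 < a ∧ a ≤ 1 / 2 ∧ 0 < C ∧ ∀ s : ℂ,
    1 - a / (1 + |s.im|) ^ (1 / 16 : ℝ) ≤ s.re → s.re ≤ 2 →
    riemannZeta₁ s ≠ 0 ∧ ‖errorSeries s‖ ≤ C * (1 + |s.im|) ^ (1 / 16 : ℝ) := by
  obtain ⟨a, C, ha, ha1, hC, hh⟩ := errorSeries_bound_high
  obtain ⟨δ, D, hδ, hD, hl⟩ := errorSeries_bound_low
  refine ⟨min a δ, C + D, by positivity, (min_le_left _ _).trans (by linarith), by positivity,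
    fun s h1 h2 => ?_⟩
  have hP1 : 1 ≤ (1 + |s.im|) ^ (1 / 16 : ℝ) :=
    Real.one_le_rpow (by linarith [abs_nonneg s.im]) (by norm_num)
  rcases le_total 2 |s.im| with ht | ht
  · have ht0 : 0 < |s.im| := by linarith
    have hle : |s.im| ^ (1 / 16 : ℝ) ≤ (1 + |s.im|) ^ (1 / 16 : ℝ) := by gcongr; linarith
    have : min a δ / (1 + |s.im|) ^ (1 / 16 : ℝ) ≤ a / |s.im| ^ (1 / 16 : ℝ) := by
      gcongr
      exact min_le_left _ _
    obtain ⟨g1, g2⟩ := hh s ht (by linarith) h2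
    refine ⟨g1, g2.trans ?_⟩
    gcongr
    linarith
  · have : min a δ / (1 + |s.im|) ^ (1 / 16 : ℝ) ≤ δ :=
      (div_le_self (by positivity) hP1).trans (min_le_right _ _)
    obtain ⟨g1, g2⟩ := hl s ht (by linarith) h2
    refine ⟨g1, g2.trans ?_⟩
    nlinarith

/-! ### A Perron formula with the weight `1 - n / x` -/

/-- The integrand weight of the smoothed Perron formula: the Mellin transform of
`y ↦ max (1 - y) 0`. -/
noncomputable def perronKernel (s : ℂ) : ℂ := 1 / s - 1 / (s + 1)

lemma norm_perronKernel_le {s : ℂ} {b : ℝ} (hb : 0 < b) (hb1 : b ≤ 1) (hs : b ≤ s.re) :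
    ‖perronKernel s‖ ≤ b⁻¹ ^ 2 * (1 + s.im ^ 2)⁻¹ := by
  have h0 : s ≠ 0 := by rintro rfl; simp at hs; linarith
  have h1 : s + 1 ≠ 0 := by
    intro h
    have := congrArg Complex.re h
    simp at this
    linarith
  have e : perronKernel s = 1 / (s * (s + 1)) := by
    unfold perronKernel; field_simp; ring
  have n1 : b ^ 2 * (1 + s.im ^ 2) ≤ ‖s‖ ^ 2 := by
    rw [Complex.sq_norm, Complex.normSq_apply]
    nlinarith [sq_nonneg s.im, mul_nonneg (sq_nonneg s.im) (by nlinarith : 0 ≤ 1 - b ^ 2)]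
  have n2 : ‖s‖ ≤ ‖s + 1‖ := by
    apply le_of_sq_le_sq _ (norm_nonneg _)
    rw [Complex.sq_norm, Complex.normSq_apply, Complex.sq_norm, Complex.normSq_apply]
    simp
    nlinarith
  rw [e, norm_div, norm_one, norm_mul, one_div, inv_pow, ← mul_inv]
  apply inv_anti₀ (by positivity)
  calc _ ≤ ‖s‖ ^ 2 := n1
    _ ≤ _ := by rw [sq]; gcongr

/-- Mellin inversion for `y ↦ max (1 - y) 0`. -/
lemma perron_kernel {y c : ℝ} (hy : 0 < y) (hc : 1 < c) :
    (1 / (2 * π)) • ∫ t : ℝ, (y : ℂ) ^ (-(c + t * Complex.I)) * perronKernel (c + t * Complex.I) =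
      ((max (1 - y) 0 : ℝ) : ℂ) := by
  set w : ℝ → ℂ := fun t => Set.indicator (Set.Ioc 0 1) (fun _ => 1 : ℝ → ℂ) t -
    Set.indicator (Set.Ioc 0 1) (fun t => (t : ℂ) ^ (1 : ℂ) : ℝ → ℂ) t with hw
  have hM : ∀ s : ℂ, 0 < s.re → HasMellin w s (perronKernel s) := by
    intro s hs
    have h1 := hasMellin_one_Ioc hs
    have h2 := hasMellin_cpow_Ioc 1 (s := s) (by simp; linarith)
    have := hasMellin_sub h1.1 h2.1
    rw [h1.2, h2.2] at this
    exact this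
  have hre : ∀ t : ℝ, ((c : ℂ) + t * Complex.I).re = c := by intro t; simp
  have him : ∀ t : ℝ, ((c : ℂ) + t * Complex.I).im = t := by intro t; simp
  have hme : ∀ t : ℝ, mellin w (c + t * Complex.I) = perronKernel (c + t * Complex.I) := by
    intro t
    exact (hM _ (by rw [hre]; linarith)).2
  have hwe : ∀ t : ℝ, 0 < t → w t = ((max (1 - t) 0 : ℝ) : ℂ) := by
    intro t ht
    by_cases h : t ≤ 1
    · simp [hw, Set.indicator, ht, h]
    · simp [hw, Set.indicator, ht, h]
      rw [max_eq_right (by linarith)]; simp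
  have key := mellinInv_mellin_eq c w hy (hM _ (by simp; linarith)).1 ?_ ?_
  · rw [hwe y hy] at key
    rw [← key, mellinInv]
    simp_rw [hme, smul_eq_mul]
  · unfold Complex.VerticalIntegrable
    simp_rw [hme]
    refine MeasureTheory.Integrable.mono' (integrable_inv_one_add_sq) ?_ ?_
    · apply Continuous.aestronglyMeasurable
      unfold perronKernel
      refine Continuous.sub ?_ ?_
      · refine continuous_const.div (by fun_prop) ?_
        intro t h
        have := congrArg Complex.re h
        simp at this; linarith
      · refine continuous_const.div (by fun_prop) ?_
        intro t h
        have := congrArg Complex.re h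
        simp at this; linarith
    · refine Filter.Eventually.of_forall fun t => ?_
      have := norm_perronKernel_le (s := c + t * Complex.I) one_pos le_rfl (by rw [hre]; linarith)
      rw [him] at this
      simpa using this
  · have : ContinuousAt (fun t : ℝ => ((max (1 - t) 0 : ℝ) : ℂ)) y := by fun_prop
    refine this.congr ?_
    filter_upwards [lt_mem_nhds hy] with t ht using (hwe t ht).symm

/-- The coefficients `Λ(n) - 1` of `errorSeries`. -/
noncomputable def vonMangoldtSubOne (n : ℕ) : ℂ :=
  ((ArithmeticFunction.vonMangoldt n : ℝ) : ℂ) - 1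

lemma lseriesSummable_vonMangoldtSubOne {s : ℂ} (hs : 1 < s.re) :
    LSeriesSummable vonMangoldtSubOne s :=
  (ArithmeticFunction.LSeriesSummable_vonMangoldt hs).sub (LSeriesSummable_one_iff.2 hs)

lemma lseries_vonMangoldtSubOne {s : ℂ} (hs : 1 < s.re) :
    LSeries vonMangoldtSubOne s = errorSeries s := by
  rw [errorSeries_eq (by rintro rfl; simp at hs) (riemannZeta_ne_zero_of_one_lt_re hs),
    ← ArithmeticFunction.LSeries_vonMangoldt_eq_deriv_riemannZeta_div hs,
    ← LSeries_one_eq_riemannZeta hs]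
  exact LSeries_sub (ArithmeticFunction.LSeriesSummable_vonMangoldt hs)
    (LSeriesSummable_one_iff.2 hs)

lemma integrable_perron_line {c : ℝ} (hc : 1 < c) {g : ℝ → ℂ} (hg : Continuous g) {B : ℝ}
    (hB : ∀ t, ‖g t‖ ≤ B) :
    MeasureTheory.Integrable (fun t : ℝ => g t * perronKernel (c + t * Complex.I)) := by
  refine MeasureTheory.Integrable.mono' (integrable_inv_one_add_sq.const_mul B) ?_ ?_
  · apply Continuous.aestronglyMeasurable
    unfold perronKernel
    refine hg.mul (Continuous.sub ?_ ?_)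
    · refine continuous_const.div (by fun_prop) ?_
      intro t h
      have := congrArg Complex.re h
      simp at this; linarith
    · refine continuous_const.div (by fun_prop) ?_
      intro t h
      have := congrArg Complex.re h
      simp at this; linarith
  · refine Filter.Eventually.of_forall fun t => ?_
    have := norm_perronKernel_le (s := c + t * Complex.I) one_pos le_rfl (by simp; linarith)
    simp only [inv_one, one_pow, one_mul, Complex.add_im, Complex.ofReal_im, Complex.mul_im,
      Complex.ofReal_re, Complex.I_im, mul_one, Complex.I_re, mul_zero, add_zero, zero_add] at this
    rw [norm_mul]
    have hB0 : 0 ≤ B := (norm_nonneg _).trans (hB 0)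
    gcongr
    exact hB t

/-- The integrand of the smoothed Perron formula for `∑ (Λ(n) - 1) (1 - n / x)`. -/
noncomputable def perronIntegrand (x : ℝ) (s : ℂ) : ℂ :=
  errorSeries s * (x : ℂ) ^ s * perronKernel s

lemma perron_formula {x c : ℝ} (hx : 0 < x) (hc : 1 < c) :
    MeasureTheory.Integrable (fun t : ℝ => perronIntegrand x (c + t * Complex.I)) ∧
    ∑ n ∈ Finset.Icc 1 ⌊x⌋₊, vonMangoldtSubOne n * (1 - n / x) =
      (1 / (2 * π)) • ∫ t : ℝ, perronIntegrand x (c + t * Complex.I) := by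
  have hre : ∀ t : ℝ, ((c : ℂ) + t * Complex.I).re = c := by intro t; simp
  have hxc : (x : ℂ) ≠ 0 := by exact_mod_cast hx.ne'
  set T : ℕ → ℝ → ℂ := fun n t => LSeries.term vonMangoldtSubOne (c + t * Complex.I) n *
    (x : ℂ) ^ (c + t * Complex.I) with hT
  set b : ℕ → ℝ := fun n => ‖LSeries.term vonMangoldtSubOne (c : ℂ) n‖ * x ^ c with hb
  have hTb : ∀ n t, ‖T n t‖ = b n := by
    intro n t
    simp only [hT, hb, norm_mul]
    rw [LSeries.norm_term_eq, LSeries.norm_term_eq, hre,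
      Complex.norm_cpow_eq_rpow_re_of_pos hx, hre]
    simp
  have hbs : Summable b := by
    have := (lseriesSummable_vonMangoldtSubOne (s := (c : ℂ)) (by simpa using hc)).norm
    exact this.mul_right _
  have hTc : ∀ n, Continuous (T n) := by
    intro n
    have h1 : Continuous fun t : ℝ => (x : ℂ) ^ (c + t * Complex.I) :=
      Continuous.const_cpow (by fun_prop) (Or.inl hxc)
    simp only [hT]
    refine Continuous.mul ?_ h1
    rcases eq_or_ne n 0 with rfl | hn
    · simp only [LSeries.term_zero]; exact continuous_const
    · simp only [LSeries.term_of_ne_zero hn]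
      refine continuous_const.div (Continuous.const_cpow (by fun_prop) (Or.inl (by exact_mod_cast hn))) ?_
      intro t
      rw [Complex.cpow_ne_zero_iff_of_exponent_ne_zero]
      · exact_mod_cast hn
      · intro h
        have := congrArg Complex.re h
        simp at this; linarith
  have hTint : ∀ n, MeasureTheory.Integrable
      (fun t : ℝ => T n t * perronKernel (c + t * Complex.I)) :=
    fun n => integrable_perron_line hc (hTc n) (B := b n) (fun t => (hTb n t).le)
  have hsumT : ∀ t : ℝ, ∑' n, T n t * perronKernel (c + t * Complex.I) =
      perronIntegrand x (c + t * Complex.I) := by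
    intro t
    rw [tsum_mul_right, perronIntegrand, ← lseries_vonMangoldtSubOne (by rw [hre]; exact hc)]
    simp only [hT, LSeries]
    rw [tsum_mul_right]
  have hI0 : MeasureTheory.Integrable (fun t : ℝ => perronIntegrand x (c + t * Complex.I)) := by
    have hcont : Continuous fun t : ℝ => ∑' n, T n t :=
      continuous_tsum hTc hbs (fun n t => (hTb n t).le)
    have hbd : ∀ t, ‖∑' n, T n t‖ ≤ ∑' n, b n := by
      intro t
      have h1 : Summable fun n => ‖T n t‖ := by simp_rw [hTb]; exact hbs
      refine (norm_tsum_le_tsum_norm h1).trans (le_of_eq ?_)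
      simp_rw [hTb]
    have := integrable_perron_line hc hcont hbd
    refine this.congr (Filter.Eventually.of_forall fun t => ?_)
    exact tsum_mul_right.symm.trans (hsumT t)
  refine ⟨hI0, ?_⟩
  have hnorm : Summable fun n => ∫ t : ℝ, ‖T n t * perronKernel (c + t * Complex.I)‖ := by
    simp_rw [norm_mul, hTb, MeasureTheory.integral_const_mul]
    exact hbs.mul_right _
  have key := (MeasureTheory.hasSum_integral_of_summable_integral_norm hTint hnorm).const_smul
    (1 / (2 * π))
  simp_rw [hsumT] at key
  have hterm : ∀ n : ℕ, (1 / (2 * π)) • ∫ t : ℝ, T n t * perronKernel (c + t * Complex.I) =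
      if n = 0 then 0 else vonMangoldtSubOne n * ((max (1 - n / x) 0 : ℝ) : ℂ) := by
    intro n
    split_ifs with hn
    · simp [hT, hn]
    have hn0 : (0 : ℝ) < n := by exact_mod_cast Nat.pos_of_ne_zero hn
    rw [← perron_kernel (div_pos hn0 hx) hc, mul_smul_comm, ← MeasureTheory.integral_const_mul]
    congr 1
    apply MeasureTheory.integral_congr_ae
    refine Filter.Eventually.of_forall fun t => ?_
    simp only [hT]
    rw [LSeries.term_of_ne_zero hn, Complex.cpow_neg, ← mul_assoc]
    congr 1
    rw [Complex.ofReal_div, Complex.div_cpow_ofReal_nonneg hn0.le hx.le]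
    · rw [inv_div]; simp; ring
  simp_rw [hterm] at key
  rw [← key.tsum_eq, tsum_eq_sum (s := Finset.Icc 1 ⌊x⌋₊)]
  · refine Finset.sum_congr rfl fun n hn => ?_
    rw [Finset.mem_Icc] at hn
    have hnx : (n : ℝ) ≤ x := (Nat.le_floor_iff hx.le).1 hn.2
    rw [if_neg (by omega), max_eq_left (by rw [sub_nonneg, div_le_one hx]; exact hnx)]
    simp
  · intro n hn
    split_ifs with h0
    · rfl
    · rw [Finset.mem_Icc, not_and_or, not_le, not_le] at hn
      have : x < n := by
        rcases hn with h | h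
        · omega
        · exact (Nat.floor_lt hx.le).1 h
      rw [max_eq_right (by rw [sub_nonpos, one_le_div hx]; exact this.le)]
      simp

/-! ### Shifting the contour -/

lemma norm_integral_sub_truncate_le {g : ℝ → ℂ} (hg : MeasureTheory.Integrable g) {K T : ℝ}
    (hT : 0 < T) (hK : ∀ t, T ≤ |t| → ‖g t‖ ≤ K * |t| ^ (-(3 / 2) : ℝ)) :
    ‖(∫ t, g t) - ∫ t in (-T)..T, g t‖ ≤ 4 * K * T ^ (-(1 / 2) : ℝ) := by
  have e1 := intervalIntegral.integral_Iic_add_Ioi (hg.integrableOn (s := Set.Iic (-T)))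
    (hg.integrableOn (s := Set.Ioi (-T)))
  have e2 := intervalIntegral.integral_interval_add_Ioi (hg.integrableOn (s := Set.Ioi (-T)))
    (hg.integrableOn (s := Set.Ioi T))
  have hi : MeasureTheory.IntegrableOn (fun t : ℝ => K * t ^ (-(3 / 2) : ℝ)) (Set.Ioi T) :=
    (integrableOn_Ioi_rpow_of_lt (by norm_num) hT).const_mul K
  have hv : ∫ t in Set.Ioi T, K * t ^ (-(3 / 2) : ℝ) = 2 * K * T ^ (-(1 / 2) : ℝ) := by
    rw [MeasureTheory.integral_const_mul, integral_Ioi_rpow_of_lt (by norm_num) hT]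
    norm_num
    ring
  have b1 : ‖∫ t in Set.Ioi T, g t‖ ≤ 2 * K * T ^ (-(1 / 2) : ℝ) := by
    rw [← hv]
    refine MeasureTheory.norm_integral_le_of_norm_le hi ?_
    refine (MeasureTheory.ae_restrict_iff' measurableSet_Ioi).2 (Filter.Eventually.of_forall ?_)
    intro t ht
    have ht' : T < t := ht
    have := hK t (by rw [abs_of_pos (hT.trans ht')]; exact ht'.le)
    rwa [abs_of_pos (hT.trans ht')] at this
  have b2 : ‖∫ t in Set.Iic (-T), g t‖ ≤ 2 * K * T ^ (-(1 / 2) : ℝ) := by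
    rw [← hv, ← integral_comp_neg_Ioi]
    refine MeasureTheory.norm_integral_le_of_norm_le hi ?_
    refine (MeasureTheory.ae_restrict_iff' measurableSet_Ioi).2 (Filter.Eventually.of_forall ?_)
    intro t ht
    have ht' : T < t := ht
    have := hK (-t) (by rw [abs_neg, abs_of_pos (hT.trans ht')]; exact ht'.le)
    rwa [abs_neg, abs_of_pos (hT.trans ht')] at this
  have : (∫ t, g t) - ∫ t in (-T)..T, g t =
      (∫ t in Set.Iic (-T), g t) + ∫ t in Set.Ioi T, g t := by
    rw [← e1, ← e2]; ring
  rw [this]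
  refine (norm_add_le _ _).trans ?_
  linarith

lemma differentiableAt_perronIntegrand {x : ℝ} (hx : 0 < x) {s : ℂ} (hs : 0 < s.re)
    (hz : riemannZeta₁ s ≠ 0) : DifferentiableAt ℂ (perronIntegrand x) s := by
  have hxc : (x : ℂ) ≠ 0 := by exact_mod_cast hx.ne'
  have h0 : s ≠ 0 := by rintro rfl; simp at hs
  have h1 : s + 1 ≠ 0 := by
    intro h
    have := congrArg Complex.re h
    simp at this
    linarith
  unfold perronIntegrand perronKernel
  refine ((differentiableAt_errorSeries hz).mul ?_).mul (DifferentiableAt.sub ?_ ?_)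
  · exact DifferentiableAt.const_cpow differentiableAt_id (Or.inl hxc)
  · exact (differentiableAt_const _).div differentiableAt_id h0
  · exact (differentiableAt_const _).div (differentiableAt_id.add_const 1) h1

lemma norm_perronIntegrand_le {x C : ℝ} (hx : 0 < x) {s : ℂ} (hs : 1 / 2 ≤ s.re)
    (hC : ‖errorSeries s‖ ≤ C) :
    ‖perronIntegrand x s‖ ≤ C * x ^ s.re * (4 * (1 + s.im ^ 2)⁻¹) := by
  unfold perronIntegrand
  rw [norm_mul, norm_mul, Complex.norm_cpow_eq_rpow_re_of_pos hx]
  have h1 := norm_perronKernel_le (b := 1 / 2) (by norm_num) (by norm_num) hs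
  norm_num at h1
  have hC0 : 0 ≤ C := (norm_nonneg _).trans hC
  gcongr

/-- Cauchy's theorem moves the truncated Perron integral from the line `Re s = c` to the line
`Re s = σ` inside the zero-free region. -/
lemma truncated_perron_le {x σ c T A B : ℝ} (hx : 0 < x) (hT : 0 < T) (hσ : 1 / 2 ≤ σ)
    (hσc : σ ≤ c) (hc : c ≤ 2)
    (hz : ∀ s : ℂ, σ ≤ s.re → s.re ≤ c → |s.im| ≤ T → riemannZeta₁ s ≠ 0)
    (hA : ∀ s : ℂ, σ ≤ s.re → s.re ≤ c → |s.im| = T → ‖perronIntegrand x s‖ ≤ A)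
    (hB : ∀ s : ℂ, s.re = σ → |s.im| ≤ T → ‖perronIntegrand x s‖ ≤ B) :
    ‖∫ t in (-T)..T, perronIntegrand x (c + t * Complex.I)‖ ≤ 4 * A + 2 * T * B := by
  have key := Complex.integral_boundary_rect_eq_zero_of_differentiableOn (perronIntegrand x)
    (⟨σ, -T⟩ : ℂ) (⟨c, T⟩ : ℂ) (by
      intro s hs
      rw [Complex.mem_reProdIm] at hs
      simp only [Set.uIcc_of_le hσc, Set.uIcc_of_le (by linarith : -T ≤ T)] at hs
      refine (differentiableAt_perronIntegrand hx (by linarith [hs.1.1]) ?_).differentiableWithinAt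
      exact hz s hs.1.1 hs.1.2 (abs_le.2 hs.2))
  simp only [smul_eq_mul] at key
  set H1 := ∫ u in σ..c, perronIntegrand x (u + ((-T : ℝ) : ℂ) * Complex.I)
  set H2 := ∫ u in σ..c, perronIntegrand x (u + (T : ℂ) * Complex.I)
  set V1 := ∫ t in (-T)..T, perronIntegrand x (c + t * Complex.I)
  set V2 := ∫ t in (-T)..T, perronIntegrand x (σ + t * Complex.I)
  have hA0 : 0 ≤ A := (norm_nonneg _).trans (hA ⟨σ, T⟩ le_rfl hσc (abs_of_pos hT))
  have b1 : ‖H1‖ ≤ 2 * A := by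
    have : ‖H1‖ ≤ A * |c - σ| := by
      refine intervalIntegral.norm_integral_le_of_norm_le_const fun u hu => ?_
      rw [Set.uIoc_of_le hσc] at hu
      refine hA _ (by simp; exact hu.1.le) (by simp; exact hu.2) ?_
      simp [abs_of_pos hT]
    refine this.trans ?_
    rw [abs_of_nonneg (by linarith), mul_comm]
    gcongr
    linarith
  have b2 : ‖H2‖ ≤ 2 * A := by
    have : ‖H2‖ ≤ A * |c - σ| := by
      refine intervalIntegral.norm_integral_le_of_norm_le_const fun u hu => ?_
      rw [Set.uIoc_of_le hσc] at hu
      refine hA _ (by simp; exact hu.1.le) (by simp; exact hu.2) ?_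
      simp [abs_of_pos hT]
    refine this.trans ?_
    rw [abs_of_nonneg (by linarith), mul_comm]
    gcongr
    linarith
  have b3 : ‖V2‖ ≤ 2 * T * B := by
    have : ‖V2‖ ≤ B * |T - -T| := by
      refine intervalIntegral.norm_integral_le_of_norm_le_const fun u hu => ?_
      rw [Set.uIoc_of_le (by linarith)] at hu
      refine hB _ (by simp) ?_
      simp [abs_le]
      exact ⟨hu.1.le, hu.2⟩
    refine this.trans (le_of_eq ?_)
    rw [abs_of_nonneg (by linarith)]; ring
  have hI : Complex.I * V1 = Complex.I * V2 + H2 - H1 := by linear_combination key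
  calc ‖V1‖ = ‖Complex.I * V1‖ := by simp
    _ ≤ ‖V2‖ + ‖H2‖ + ‖H1‖ := by
      rw [hI]
      refine (norm_sub_le _ _).trans ?_
      refine add_le_add_left ((norm_add_le _ _).trans ?_) _
      simp
    _ ≤ _ := by linarith

/-- Stretched exponential decay beats every power. -/
lemma exists_pow_mul_exp_neg_le {a : ℝ} (ha : 0 < a) : ∃ K : ℝ, 0 < K ∧ ∀ L : ℝ, 1 ≤ L →
    L ^ 30 * Real.exp (-(a * L ^ (1 / 4 : ℝ))) ≤ K := by
  refine ⟨(Nat.factorial 120 : ℝ) / a ^ 120, by positivity, fun L hL => ?_⟩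
  have h := pow_div_factorial_le_exp (a * L ^ (1 / 4 : ℝ)) (by positivity) 120
  have e : (L ^ (1 / 4 : ℝ)) ^ 120 = L ^ 30 := by
    rw [← rpow_natCast, ← rpow_mul (by linarith), ← rpow_natCast]
    norm_num
  rw [mul_pow, e] at h
  rw [Real.exp_neg, ← div_eq_mul_inv, div_le_div_iff₀ (Real.exp_pos _) (by positivity)]
  rw [div_le_iff₀ (by positivity)] at h
  linarith

/-- The smoothed prime number theorem with an error term saving six logarithms. -/
lemma smoothed_pnt : ∃ K : ℝ, 0 < K ∧ ∀ x : ℝ, Real.exp 1 ≤ x →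
    ‖∑ n ∈ Finset.Icc 1 ⌊x⌋₊, vonMangoldtSubOne n * (1 - n / x)‖ ≤ K * x / (log x) ^ 6 := by
  obtain ⟨a, C, ha, ha2, hC, H⟩ := errorSeries_bound
  obtain ⟨K₀, hK₀, hexp⟩ := exists_pow_mul_exp_neg_le (a := a / 2) (by linarith)
  refine ⟨32 * C * Real.exp 1 + 32 * C * Real.exp 1 + 16 * C * K₀, by positivity,
    fun x hx => ?_⟩
  have hx0 : 0 < x := (Real.exp_pos 1).trans_le hx
  set L := log x with hL
  have hL1 : 1 ≤ L := by rw [hL, Real.le_log_iff_exp_le hx0]; exact hx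
  have hL0 : 0 < L := by linarith
  set c := 1 + 1 / L with hc
  have hiL : 1 / L ≤ 1 := by rw [div_le_one hL0]; exact hL1
  have hc1 : 1 < c := by rw [hc]; linarith [show 0 < 1 / L by positivity]
  have hc2 : c ≤ 2 := by rw [hc]; linarith
  set T := L ^ 12 with hT
  have hT1 : 1 ≤ T := one_le_pow₀ hL1
  have hT0 : 0 < T := by linarith
  set q := (1 + T) ^ (1 / 16 : ℝ) with hq
  have hq1 : 1 ≤ q := one_le_rpow (by linarith) (by norm_num)
  have hqT : q ≤ 2 * T := by
    calc q ≤ (1 + T) ^ (1 : ℝ) := rpow_le_rpow_of_exponent_le (by linarith) (by norm_num)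
      _ ≤ 2 * T := by rw [rpow_one]; linarith
  set σ := 1 - a / q with hσ
  have haq : a / q ≤ 1 / 2 := (div_le_self ha.le hq1).trans ha2
  have hσ2 : 1 / 2 ≤ σ := by rw [hσ]; linarith
  have hσ1 : σ ≤ 1 := by rw [hσ]; linarith [show 0 < a / q by positivity]
  have hxc : x ^ c = Real.exp 1 * x := by
    rw [hc, rpow_add hx0, rpow_one, mul_comm, rpow_def_of_pos hx0, ← hL]
    congr 2
    field_simp
  have hmono : ∀ t : ℝ, |t| ≤ T → (1 + |t|) ^ (1 / 16 : ℝ) ≤ q := fun t ht =>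
    rpow_le_rpow (by positivity) (by linarith) (by norm_num)
  have hreg : ∀ s : ℂ, σ ≤ s.re → s.re ≤ c → |s.im| ≤ T →
      riemannZeta₁ s ≠ 0 ∧ ‖errorSeries s‖ ≤ C * q := by
    intro s h1 h2 h3
    have h4 := hmono _ h3
    have h5 := H s (by
      refine le_trans ?_ h1
      rw [hσ]
      gcongr) (h2.trans hc2)
    exact ⟨h5.1, h5.2.trans (by gcongr)⟩
  obtain ⟨hTint, hform⟩ := perron_formula hx0 hc1
  rw [hform]
  have hre : ∀ t : ℝ, ((c : ℂ) + t * Complex.I).re = c := by intro t; simp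
  have him : ∀ t : ℝ, ((c : ℂ) + t * Complex.I).im = t := by intro t; simp
  -- the two tails of the vertical line
  have tail := norm_integral_sub_truncate_le hTint (K := 8 * C * Real.exp 1 * x) hT0 (by
    intro t ht
    have ht1 : 1 ≤ |t| := hT1.trans ht
    have h1 := (H (c + t * Complex.I) (by
      rw [hre]
      have : 0 ≤ a / (1 + |((c : ℂ) + t * Complex.I).im|) ^ (1 / 16 : ℝ) := by positivity
      linarith) (by rw [hre]; exact hc2)).2
    have h2 := norm_perronIntegrand_le hx0 (by rw [hre]; linarith) h1
    rw [hre, him, hxc] at h2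
    have h3 : (1 + |t|) ^ (1 / 16 : ℝ) ≤ 2 * |t| ^ (1 / 2 : ℝ) := by
      calc (1 + |t|) ^ (1 / 16 : ℝ) ≤ (1 + |t|) ^ (1 / 2 : ℝ) :=
            rpow_le_rpow_of_exponent_le (by linarith) (by norm_num)
        _ ≤ (2 ^ (2 : ℝ) * |t|) ^ (1 / 2 : ℝ) :=
            rpow_le_rpow (by positivity) (by norm_num; linarith) (by norm_num)
        _ = 2 * |t| ^ (1 / 2 : ℝ) := by
            rw [mul_rpow (by positivity) (by positivity), ← rpow_mul (by norm_num)]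
            norm_num
    have h4 : (1 + t ^ 2)⁻¹ ≤ |t| ^ (-2 : ℝ) := by
      rw [rpow_neg (by positivity)]
      apply inv_anti₀ (by positivity)
      rw [rpow_two, sq_abs]; linarith
    have h5 : |t| ^ (1 / 2 : ℝ) * |t| ^ (-2 : ℝ) = |t| ^ (-(3 / 2) : ℝ) := by
      rw [← rpow_add (by linarith)]; norm_num
    calc _ ≤ _ := h2
      _ ≤ C * (2 * |t| ^ (1 / 2 : ℝ)) * (Real.exp 1 * x) * (4 * |t| ^ (-2 : ℝ)) := by gcongr
      _ = 8 * C * Real.exp 1 * x * (|t| ^ (1 / 2 : ℝ) * |t| ^ (-2 : ℝ)) := by ring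
      _ = _ := by rw [h5])
  have hTr : T ^ (-(1 / 2) : ℝ) = 1 / L ^ 6 := by
    rw [rpow_neg hT0.le, hT, ← rpow_natCast, ← rpow_mul hL0.le, one_div, ← rpow_natCast]
    norm_num
  rw [hTr] at tail
  have shift := truncated_perron_le (A := 8 * C * Real.exp 1 * x / T)
    (B := 4 * C * q * x ^ σ) hx0 hT0 hσ2 (by linarith : σ ≤ c) hc2
    (fun s h1 h2 h3 => (hreg s h1 h2 h3).1) (by
      intro s h1 h2 h3
      have h4 := norm_perronIntegrand_le hx0 (by linarith) (hreg s h1 h2 h3.le).2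
      have h5 : x ^ s.re ≤ Real.exp 1 * x := by
        rw [← hxc]
        exact rpow_le_rpow_of_exponent_le ((Real.one_le_exp (by norm_num)).trans hx) h2
      have h6 : (1 + s.im ^ 2)⁻¹ ≤ (T ^ 2)⁻¹ := by
        apply inv_anti₀ (by positivity)
        rw [← h3, sq_abs]; linarith
      calc _ ≤ _ := h4
        _ ≤ C * (2 * T) * (Real.exp 1 * x) * (4 * (T ^ 2)⁻¹) := by gcongr
        _ = _ := by field_simp; ring) (by
      intro s h1 h3
      have h4 := norm_perronIntegrand_le hx0 (by linarith) (hreg s h1.ge (by linarith) h3).2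
      have h6 : (1 + s.im ^ 2)⁻¹ ≤ 1 := inv_le_one_of_one_le₀ (by nlinarith [sq_nonneg s.im])
      calc _ ≤ _ := h4
        _ ≤ C * q * x ^ σ * (4 * 1) := by rw [h1]; gcongr
        _ = _ := by ring)
  have hq34 : q ≤ 2 * L ^ (3 / 4 : ℝ) := by
    calc q ≤ (2 * T) ^ (1 / 16 : ℝ) := rpow_le_rpow (by positivity) (by linarith) (by norm_num)
      _ = 2 ^ (1 / 16 : ℝ) * L ^ (3 / 4 : ℝ) := by
        rw [mul_rpow (by norm_num) hT0.le, hT, ← rpow_natCast, ← rpow_mul hL0.le]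
        norm_num
      _ ≤ 2 ^ (1 : ℝ) * L ^ (3 / 4 : ℝ) := by
        gcongr <;> norm_num
      _ = _ := by rw [rpow_one]
  have hxσ : x ^ σ ≤ x * Real.exp (-(a / 2 * L ^ (1 / 4 : ℝ))) := by
    rw [hσ, sub_eq_add_neg, rpow_add hx0, rpow_one]
    gcongr
    rw [rpow_def_of_pos hx0, ← hL]
    apply Real.exp_le_exp.2
    have h1 : L = L ^ (1 / 4 : ℝ) * L ^ (3 / 4 : ℝ) := by
      rw [← rpow_add hL0]; norm_num
    have h2 : a / 2 * L ^ (1 / 4 : ℝ) ≤ L * (a / q) := by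
      rw [← mul_div_assoc, le_div_iff₀ (by linarith)]
      calc a / 2 * L ^ (1 / 4 : ℝ) * q ≤ a / 2 * L ^ (1 / 4 : ℝ) * (2 * L ^ (3 / 4 : ℝ)) := by
            gcongr
        _ = (L ^ (1 / 4 : ℝ) * L ^ (3 / 4 : ℝ)) * a := by ring
        _ = L * a := by rw [← h1]
    linarith
  have hB : 2 * T * (4 * C * q * x ^ σ) ≤ 16 * C * K₀ * x / L ^ 6 := by
    rw [le_div_iff₀ (by positivity)]
    calc 2 * T * (4 * C * q * x ^ σ) * L ^ 6
        ≤ 2 * T * (4 * C * (2 * T) * (x * Real.exp (-(a / 2 * L ^ (1 / 4 : ℝ))))) * L ^ 6 := by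
          gcongr
      _ = 16 * C * x * (L ^ 30 * Real.exp (-(a / 2 * L ^ (1 / 4 : ℝ)))) := by rw [hT]; ring
      _ ≤ 16 * C * x * K₀ := by gcongr; exact hexp L hL1
      _ = _ := by ring
  have hA : 4 * (8 * C * Real.exp 1 * x / T) ≤ 32 * C * Real.exp 1 * x / L ^ 6 := by
    rw [← mul_div_assoc]
    rw [show 4 * (8 * C * Real.exp 1 * x) = 32 * C * Real.exp 1 * x by ring]
    gcongr
    rw [hT]
    exact pow_le_pow_right₀ hL1 (by norm_num)
  have hpi : ‖((1 / (2 * π) : ℝ))‖ ≤ 1 := by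
    rw [Real.norm_eq_abs, abs_of_pos (by positivity), div_le_one (by positivity)]
    linarith [Real.pi_gt_three]
  rw [norm_smul]
  have htot : ‖∫ t : ℝ, perronIntegrand x (c + t * Complex.I)‖ ≤
      (32 * C * Real.exp 1 + 32 * C * Real.exp 1 + 16 * C * K₀) * x / L ^ 6 := by
    have := norm_le_norm_sub_add (∫ t : ℝ, perronIntegrand x (c + t * Complex.I))
      (∫ t in (-T)..T, perronIntegrand x (c + t * Complex.I))
    have e : (32 * C * Real.exp 1 + 32 * C * Real.exp 1 + 16 * C * K₀) * x / L ^ 6 =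
      4 * (8 * C * Real.exp 1 * x) * (1 / L ^ 6) + 32 * C * Real.exp 1 * x / L ^ 6 +
        16 * C * K₀ * x / L ^ 6 := by ring
    linarith
  calc _ ≤ 1 * ‖∫ t : ℝ, perronIntegrand x (c + t * Complex.I)‖ := by gcongr
    _ ≤ _ := by rw [one_mul]; exact htot

/-! ### Removing the smoothing: the prime number theorem for `ψ` and `θ` -/

/-- The first Riesz mean `∑_{n ≤ x} Λ(n) (x - n)`, the primitive of `ψ`. -/
noncomputable def rieszPsi (x : ℝ) : ℝ :=
  ∑ n ∈ Finset.Ioc 0 ⌊x⌋₊, ArithmeticFunction.vonMangoldt n * (x - n)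

/-- `rieszPsi` is convex and `ψ` is a subgradient of it. -/
lemma rieszPsi_tangent {x y : ℝ} (hy : 0 ≤ y) :
    rieszPsi x + (y - x) * Chebyshev.psi x ≤ rieszPsi y := by
  have e1 : rieszPsi x + (y - x) * Chebyshev.psi x =
      ∑ n ∈ Finset.Ioc 0 ⌊x⌋₊, ArithmeticFunction.vonMangoldt n * (y - n) := by
    unfold rieszPsi Chebyshev.psi
    rw [Finset.mul_sum, ← Finset.sum_add_distrib]
    exact Finset.sum_congr rfl fun n _ => by ring
  rw [e1, rieszPsi]
  rcases le_total x y with h | h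
  · refine Finset.sum_le_sum_of_subset_of_nonneg
      (Finset.Ioc_subset_Ioc le_rfl (Nat.floor_le_floor h)) ?_
    intro n hn _
    rw [Finset.mem_Ioc] at hn
    have := (Nat.le_floor_iff hy).1 hn.2
    exact mul_nonneg ArithmeticFunction.vonMangoldt_nonneg (by linarith)
  · rw [← Finset.sum_sdiff (Finset.Ioc_subset_Ioc (le_refl 0) (Nat.floor_le_floor h))]
    refine add_le_of_nonpos_left (Finset.sum_nonpos ?_)
    intro n hn
    rw [Finset.mem_sdiff, Finset.mem_Ioc, Finset.mem_Ioc] at hn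
    have : ⌊y⌋₊ < n := by omega
    have := (Nat.floor_lt hy).1 this
    exact mul_nonpos_of_nonneg_of_nonpos ArithmeticFunction.vonMangoldt_nonneg (by linarith)

lemma sum_Ioc_sub (m : ℕ) (x : ℝ) :
    ∑ n ∈ Finset.Ioc 0 m, (x - n) = m * x - m * (m + 1) / 2 := by
  induction m with
  | zero => simp
  | succ k ih =>
    rw [Finset.sum_Ioc_succ_top (by omega), ih]
    push_cast; ring

lemma rieszPsi_asymptotic : ∃ K : ℝ, 0 < K ∧ ∀ x : ℝ, Real.exp 1 ≤ x →
    |rieszPsi x - x ^ 2 / 2| ≤ K * x ^ 2 / (log x) ^ 6 := by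
  obtain ⟨K, hK, h⟩ := smoothed_pnt
  refine ⟨K + 720, by positivity, fun x hx => ?_⟩
  have hx0 : 0 < x := (Real.exp_pos 1).trans_le hx
  have hx1 : 1 ≤ x := (Real.one_le_exp (by norm_num)).trans hx
  have hL1 : 1 ≤ log x := by rw [Real.le_log_iff_exp_le hx0]; exact hx
  have h1 := h x hx
  have e : ∑ n ∈ Finset.Icc 1 ⌊x⌋₊, vonMangoldtSubOne n * (1 - n / x) =
      (((rieszPsi x - (⌊x⌋₊ * x - ⌊x⌋₊ * (⌊x⌋₊ + 1) / 2)) / x : ℝ) : ℂ) := by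
    rw [← sum_Ioc_sub, rieszPsi, ← Finset.sum_sub_distrib, Finset.sum_div, Complex.ofReal_sum]
    refine Finset.sum_congr rfl fun n _ => ?_
    have : (x : ℂ) ≠ 0 := by exact_mod_cast hx0.ne'
    unfold vonMangoldtSubOne
    push_cast
    field_simp
  rw [e, Complex.norm_real, Real.norm_eq_abs, abs_div, abs_of_pos hx0, div_le_iff₀ hx0] at h1
  have f1 := Nat.floor_le hx0.le
  have f2 := Nat.lt_floor_add_one x
  have h2 : |(⌊x⌋₊ * x - ⌊x⌋₊ * (⌊x⌋₊ + 1) / 2 : ℝ) - x ^ 2 / 2| ≤ x := by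
    rw [abs_le]
    constructor <;> nlinarith
  have h3 : x ≤ 720 * x ^ 2 / (log x) ^ 6 := by
    have := pow_div_factorial_le_exp (log x) (by linarith) 6
    rw [Real.exp_log hx0, div_le_iff₀ (by positivity)] at this
    norm_num [Nat.factorial] at this
    rw [le_div_iff₀ (by positivity)]
    nlinarith
  calc _ ≤ |rieszPsi x - (⌊x⌋₊ * x - ⌊x⌋₊ * (⌊x⌋₊ + 1) / 2)| +
        |(⌊x⌋₊ * x - ⌊x⌋₊ * (⌊x⌋₊ + 1) / 2 : ℝ) - x ^ 2 / 2| := abs_sub_le _ _ _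
    _ ≤ K * x / (log x) ^ 6 * x + 720 * x ^ 2 / (log x) ^ 6 := by linarith
    _ = _ := by ring

/-- Comparing `rieszPsi` at `x` and `x ± x / (log x) ^ 3` through the tangent inequality: the saving
of six logarithms is halved. -/
lemma psi_asymptotic_large : ∃ K : ℝ, 0 < K ∧ ∀ x : ℝ, Real.exp 4 ≤ x →
    |Chebyshev.psi x - x| ≤ K * x / (log x) ^ 3 := by
  obtain ⟨K, hK, h⟩ := rieszPsi_asymptotic
  refine ⟨1 / 2 + 65 * K, by positivity, fun x hx => ?_⟩
  have hx0 : 0 < x := (Real.exp_pos 4).trans_le hx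
  have hL4 : 4 ≤ log x := by rw [Real.le_log_iff_exp_le hx0]; exact hx
  have h4 : (2 : ℝ) * Real.exp 1 ≤ Real.exp 4 := by
    have e : Real.exp 4 = Real.exp 3 * Real.exp 1 := by rw [← Real.exp_add]; norm_num
    rw [e]
    gcongr
    linarith [Real.add_one_le_exp 3]
  set L := log x with hL
  have hL0 : 0 < L := by linarith
  set d := x / L ^ 3 with hd
  have hd0 : 0 < d := by positivity
  have hL64 : (64 : ℝ) ≤ L ^ 3 := by
    calc (64 : ℝ) = 4 ^ 3 := by norm_num
      _ ≤ L ^ 3 := by gcongr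
  have hd64 : d ≤ x / 64 := by rw [hd]; gcongr
  have hdx : x ^ 2 / L ^ 6 = d ^ 2 := by rw [hd]; field_simp
  have g0 := abs_le.1 (h x (by linarith [Real.exp_pos 1]))
  have gp := abs_le.1 (h (x + d) (by linarith [Real.exp_pos 1]))
  have gm := abs_le.1 (h (x - d) (by linarith [Real.exp_pos 1]))
  rw [mul_div_assoc, hdx] at g0
  have hp : K * (x + d) ^ 2 / log (x + d) ^ 6 ≤ 4 * K * d ^ 2 := by
    rw [← hdx]
    calc K * (x + d) ^ 2 / log (x + d) ^ 6 ≤ K * (2 * x) ^ 2 / L ^ 6 := by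
          gcongr
          · linarith
          · rw [hL]; exact Real.log_le_log hx0 (by linarith)
      _ = _ := by ring
  have hm : K * (x - d) ^ 2 / log (x - d) ^ 6 ≤ 64 * K * d ^ 2 := by
    have hlog : L / 2 ≤ log (x - d) := by
      rw [hL, div_eq_inv_mul, ← Real.log_rpow hx0]
      apply Real.log_le_log (by positivity)
      have h1 : x ^ (2⁻¹ : ℝ) = √x := by rw [Real.sqrt_eq_rpow]; norm_num
      rw [h1]
      have h2 : √x ≤ x / 2 := by
        rw [Real.sqrt_le_left (by linarith)]
        nlinarith [Real.add_one_le_exp 4]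
      linarith
    rw [← hdx]
    calc K * (x - d) ^ 2 / log (x - d) ^ 6 ≤ K * x ^ 2 / (L / 2) ^ 6 := by
          gcongr
          · linarith
          · linarith
      _ = _ := by field_simp; ring
  have t1 := rieszPsi_tangent (x := x) (by linarith : 0 ≤ x + d)
  have t2 := rieszPsi_tangent (x := x) (by linarith : 0 ≤ x - d)
  have e : (1 / 2 + 65 * K) * x / L ^ 3 = (1 / 2 + 65 * K) * d := by rw [hd]; ring
  rw [e, abs_le]
  constructor
  · have : d * (x - Chebyshev.psi x) ≤ d * ((1 / 2 + 65 * K) * d) := by nlinarith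
    linarith [le_of_mul_le_mul_left this hd0]
  · have : d * (Chebyshev.psi x - x) ≤ d * ((1 / 2 + 65 * K) * d) := by nlinarith
    linarith [le_of_mul_le_mul_left this hd0]

/-- The prime number theorem for Chebyshev's `θ`, with an error saving three logarithms. -/
lemma theta_asymptotic : ∃ K : ℝ, 0 < K ∧ ∀ x : ℝ, 2 ≤ x →
    |Chebyshev.theta x - x| ≤ K * x / (log x) ^ 3 := by
  obtain ⟨K, hK, h⟩ := psi_asymptotic_large
  obtain ⟨C, hC⟩ := Chebyshev.psi_sub_theta_le_mul_sqrt
  have hl4 : (0 : ℝ) < log 4 := Real.log_pos (by norm_num)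
  refine ⟨K + 48 * |C| + 64 * (log 4 + 1), by positivity, fun x hx => ?_⟩
  have hx0 : 0 < x := by linarith
  have hL : 0 < log x := Real.log_pos (by linarith)
  have p1 : 0 ≤ K * x / (log x) ^ 3 := by positivity
  have p2 : 0 ≤ 48 * |C| * x / (log x) ^ 3 := by positivity
  have p3 : 0 ≤ 64 * (log 4 + 1) * x / (log x) ^ 3 := by positivity
  have e : (K + 48 * |C| + 64 * (log 4 + 1)) * x / (log x) ^ 3 = K * x / (log x) ^ 3 +
    48 * |C| * x / (log x) ^ 3 + 64 * (log 4 + 1) * x / (log x) ^ 3 := by ring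
  rw [e]
  rcases le_or_gt (Real.exp 4) x with h4 | h4
  · have h1 := h x h4
    have h2 := Chebyshev.theta_le_psi x
    have h3 : C * √x ≤ 48 * |C| * x / (log x) ^ 3 := by
      have h5 := pow_div_factorial_le_exp (log x / 2) (by positivity) 3
      have h6 : Real.exp (log x / 2) = √x := by
        rw [Real.sqrt_eq_rpow, Real.rpow_def_of_pos hx0]; congr 1; ring
      rw [h6, div_le_iff₀ (by positivity), div_pow] at h5
      norm_num [Nat.factorial] at h5
      rw [le_div_iff₀ (by positivity)]
      have h7 : √x * (log x) ^ 3 ≤ 48 * x := by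
        nlinarith [Real.mul_self_sqrt hx0.le, Real.sqrt_nonneg x]
      calc C * √x * (log x) ^ 3 = C * (√x * (log x) ^ 3) := by ring
        _ ≤ |C| * (48 * x) := mul_le_mul (le_abs_self C) h7 (by positivity) (by positivity)
        _ = _ := by ring
    have h8 := hC x
    rw [abs_le] at h1 ⊢
    constructor <;> linarith
  · have h1 := Chebyshev.theta_le_log4_mul_x hx0.le
    have h2 := Chebyshev.theta_nonneg x
    have h3 : (log x) ^ 3 ≤ 64 := by
      have : log x ≤ 4 := by rw [Real.log_le_iff_le_exp hx0]; exact h4.le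
      calc (log x) ^ 3 ≤ 4 ^ 3 := by gcongr
        _ = 64 := by norm_num
    have h4 : (log 4 + 1) * x ≤ 64 * (log 4 + 1) * x / (log x) ^ 3 := by
      rw [le_div_iff₀ (by positivity)]
      calc (log 4 + 1) * x * (log x) ^ 3 ≤ (log 4 + 1) * x * 64 := by gcongr
        _ = _ := by ring
    rw [abs_le]
    have : 0 < log 4 * x := by positivity
    constructor <;> linarith

/-! ### The prime counting function -/

lemma hasDerivAt_div_log_pow {t : ℝ} (ht : 1 < t) (k : ℕ) :
    HasDerivAt (fun t : ℝ => t / (log t) ^ (k + 1))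
      (1 / (log t) ^ (k + 1) - (k + 1) / (log t) ^ (k + 2)) t := by
  have h0 : t ≠ 0 := by linarith
  have hl : log t ≠ 0 := (Real.log_pos ht).ne'
  have h := (hasDerivAt_id t).div ((Real.hasDerivAt_log h0).pow (k + 1)) (pow_ne_zero _ hl)
  refine h.congr_deriv ?_
  simp only [id, Nat.add_sub_cancel, Pi.pow_apply]
  push_cast
  field_simp
  ring

lemma intervalIntegrable_inv_log_pow {a b : ℝ} (ha : 1 < a) (hab : a ≤ b) (c : ℝ) (k : ℕ) :
    IntervalIntegrable (fun t : ℝ => c / (log t) ^ k) MeasureTheory.volume a b := by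
  refine ContinuousOn.intervalIntegrable fun t ht => ContinuousAt.continuousWithinAt ?_
  rw [Set.uIcc_of_le hab] at ht
  have h1 : 1 < t := lt_of_lt_of_le ha ht.1
  have : t ≠ 0 := by linarith
  have : (log t) ^ k ≠ 0 := pow_ne_zero _ (Real.log_pos h1).ne'
  fun_prop

lemma log_pow_four_le {x : ℝ} (hx : 1 ≤ x) : (log x) ^ 4 ≤ 24 * x := by
  have := pow_div_factorial_le_exp (log x) (Real.log_nonneg hx) 4
  rw [Real.exp_log (by linarith), div_le_iff₀ (by positivity)] at this
  norm_num [Nat.factorial] at this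
  linarith

/-- Three terms of the asymptotic expansion of `π`. -/
lemma primePi_asymptotic : ∃ K : ℝ, 0 < K ∧ ∀ x : ℝ, Real.exp 8 ≤ x →
    |(primePi x : ℝ) - x * (1 / log x + 1 / (log x) ^ 2 + 2 / (log x) ^ 3)| ≤
      K * x / (log x) ^ 4 := by
  obtain ⟨K, hK, hθ⟩ := theta_asymptotic
  set A := Real.exp 8 with hA
  have hA2 : 2 ≤ A := by linarith [Real.add_one_le_exp 8]
  set F : ℝ → ℝ := fun t => t / (log t) ^ 2 + 2 * (t / (log t) ^ 3) with hF
  set Φ : ℝ → ℝ := fun t => t / (log t) ^ 4 with hΦ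
  have hΦA : 0 ≤ Φ A := by
    have : 0 ≤ log A := Real.log_nonneg (by linarith)
    simp only [hΦ]; positivity
  set B := (∫ t in (2 : ℝ)..A, Chebyshev.theta t / (t * log t ^ 2)) - F A with hB
  refine ⟨K + 24 * |B| + 2 * (K + 6), by positivity, fun x hx => ?_⟩
  have hx0 : 0 < x := by linarith
  have hL8 : 8 ≤ log x := by rw [Real.le_log_iff_exp_le hx0]; exact hx
  have hL0 : 0 < log x := by linarith
  have hθint : ∀ a b : ℝ, 2 ≤ a → a ≤ b → IntervalIntegrable
      (fun t => Chebyshev.theta t / (t * log t ^ 2)) MeasureTheory.volume a b := by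
    intro a b ha hab
    rw [intervalIntegrable_iff_integrableOn_Icc_of_le hab]
    exact (Chebyshev.integrableOn_theta_div_id_mul_log_sq b).mono_set
      (Set.Icc_subset_Icc ha le_rfl)
  have hFd : ∀ t ∈ Set.uIcc A x, HasDerivAt F (1 / (log t) ^ 2 - 6 / (log t) ^ 4) t := by
    intro t ht
    rw [Set.uIcc_of_le hx] at ht
    have h1 : 1 < t := by linarith [ht.1]
    have d1 := hasDerivAt_div_log_pow h1 1
    have d2 := (hasDerivAt_div_log_pow h1 2).const_mul 2
    refine (d1.add d2).congr_deriv ?_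
    push_cast
    ring
  have hΦd : ∀ t ∈ Set.uIcc A x, HasDerivAt Φ (1 / (log t) ^ 4 - 4 / (log t) ^ 5) t := by
    intro t ht
    rw [Set.uIcc_of_le hx] at ht
    have h1 : 1 < t := by linarith [ht.1]
    refine (hasDerivAt_div_log_pow h1 3).congr_deriv ?_
    push_cast
    ring
  have iF : IntervalIntegrable (fun t : ℝ => 1 / (log t) ^ 2 - 6 / (log t) ^ 4)
      MeasureTheory.volume A x :=
    (intervalIntegrable_inv_log_pow (by linarith) hx _ _).sub
      (intervalIntegrable_inv_log_pow (by linarith) hx _ _)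
  have iΦ : IntervalIntegrable (fun t : ℝ => 1 / (log t) ^ 4 - 4 / (log t) ^ 5)
      MeasureTheory.volume A x :=
    (intervalIntegrable_inv_log_pow (by linarith) hx _ _).sub
      (intervalIntegrable_inv_log_pow (by linarith) hx _ _)
  have vF := intervalIntegral.integral_eq_sub_of_hasDerivAt hFd iF
  have vΦ := intervalIntegral.integral_eq_sub_of_hasDerivAt hΦd iΦ
  have hcmp : ‖∫ t in A..x, (Chebyshev.theta t / (t * log t ^ 2) -
      (1 / (log t) ^ 2 - 6 / (log t) ^ 4))‖ ≤
      ∫ t in A..x, 2 * (K + 6) * (1 / (log t) ^ 4 - 4 / (log t) ^ 5) := by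
    refine intervalIntegral.norm_integral_le_of_norm_le hx
      (Filter.Eventually.of_forall fun t ht => ?_) (iΦ.const_mul _)
    have ht0 : 0 < t := by linarith [ht.1]
    have hl8 : 8 ≤ log t := by rw [Real.le_log_iff_exp_le ht0]; exact ht.1.le
    have hl0 : 0 < log t := by linarith
    have h1 := hθ t (by linarith [ht.1])
    have e : Chebyshev.theta t / (t * log t ^ 2) - (1 / (log t) ^ 2 - 6 / (log t) ^ 4) =
        (Chebyshev.theta t - t) / (t * log t ^ 2) + 6 / (log t) ^ 4 := by
      field_simp
      ring
    rw [e, Real.norm_eq_abs]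
    have h2 : |(Chebyshev.theta t - t) / (t * log t ^ 2)| ≤ K / (log t) ^ 4 := by
      rw [abs_div, abs_of_pos (by positivity : 0 < t * log t ^ 2), div_le_iff₀ (by positivity)]
      refine h1.trans ?_
      rw [div_mul_eq_mul_div, div_le_div_iff₀ (by positivity) (by positivity)]
      have : 0 ≤ K * t * (log t) ^ 5 * (log t - 1) :=
        mul_nonneg (by positivity) (by linarith)
      nlinarith
    have h3 : 4 / (log t) ^ 5 ≤ 1 / 2 / (log t) ^ 4 := by
      rw [div_le_div_iff₀ (by positivity) (by positivity)]
      have : 0 ≤ (log t) ^ 4 * (log t - 8) := mul_nonneg (by positivity) (by linarith)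
      nlinarith
    have h4 : |(6 : ℝ) / (log t) ^ 4| = 6 / (log t) ^ 4 := abs_of_pos (by positivity)
    calc _ ≤ K / (log t) ^ 4 + 6 / (log t) ^ 4 := by
          refine (abs_add_le _ _).trans ?_
          rw [h4]; linarith
      _ = 2 * (K + 6) * (1 / (log t) ^ 4 - 1 / 2 / (log t) ^ 4) := by ring
      _ ≤ _ := by gcongr
  rw [intervalIntegral.integral_const_mul, vΦ,
    intervalIntegral.integral_sub (hθint A x hA2 hx) iF, vF] at hcmp
  have hsplit := intervalIntegral.integral_add_adjacent_intervals (hθint 2 A le_rfl hA2)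
    (hθint A x hA2 hx)
  have hπ := Chebyshev.primeCounting_eq_theta_div_log_add_integral (show 2 ≤ x by linarith)
  have hb : |B| ≤ 24 * |B| * x / (log x) ^ 4 := by
    rw [le_div_iff₀ (by positivity)]
    nlinarith [log_pow_four_le (show 1 ≤ x by linarith), abs_nonneg B]
  have ht : |Chebyshev.theta x / log x - x / log x| ≤ K * x / (log x) ^ 4 := by
    rw [← sub_div, abs_div, abs_of_pos hL0, div_le_iff₀ hL0]
    refine (hθ x (by linarith)).trans (le_of_eq ?_)
    field_simp
  have e : (primePi x : ℝ) - x * (1 / log x + 1 / (log x) ^ 2 + 2 / (log x) ^ 3) =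
      (Chebyshev.theta x / log x - x / log x) + B +
      ((∫ t in A..x, Chebyshev.theta t / (t * log t ^ 2)) - (F x - F A)) := by
    unfold primePi
    rw [hπ, ← hsplit, hB]
    simp only [hF]
    ring
  rw [e]
  refine (abs_add_three _ _ _).trans ?_
  rw [Real.norm_eq_abs] at hcmp
  have e2 : (K + 24 * |B| + 2 * (K + 6)) * x / (log x) ^ 4 = K * x / (log x) ^ 4 +
    24 * |B| * x / (log x) ^ 4 + 2 * (K + 6) * Φ x := by simp only [hΦ]; ring
  rw [e2]
  have : 0 ≤ 2 * (K + 6) * Φ A := by positivity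
  nlinarith

/-! ### Ramanujan primes -/

lemma log_two_bounds : 0 < log 2 ∧ log 2 < 1 :=
  ⟨Real.log_pos (by norm_num), by linarith [Real.log_two_lt_d9]⟩

set_option maxHeartbeats 1000000 in
/-- Algebraic core of the comparison of `π x` with `π x - π (x / 2)`: with `u = 1 / log x` and
`v = 1 / log (x / 2)`, `P` and `Q` stand for `π x / x` and `2 * π (x / 2) / x`. -/
lemma expansion_core {l u v P Q K : ℝ} (hl0 : 0 < l) (hl1 : l < 1) (hu0 : 0 < u)
    (hu : u ≤ 1 / 2) (hv : v = u + l * u * v) (hK : 0 ≤ K)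
    (hP : |P - (u + u ^ 2 + 2 * u ^ 3)| ≤ K * u ^ 4)
    (hQ : |Q - (v + v ^ 2 + 2 * v ^ 3)| ≤ K * v ^ 4) :
    |2 * P - Q - u| ≤ (18 * K + 50) * u ^ 2 ∧
    |P - (2 * P - Q) * (1 + l * u + (2 * l ^ 2 + l) * u ^ 2)| ≤ (100 * K + 400) * u ^ 4 := by
  have hlu : l * u ≤ 1 / 2 := by nlinarith
  have hlu0 : 0 < l * u := by positivity
  have hv0 : 0 < v := by nlinarith
  have hvu : u ≤ v := by nlinarith
  have hv2 : v ≤ 2 * u := by nlinarith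
  have hl2 : l ^ 2 ≤ 1 := by nlinarith
  have hl3 : l ^ 3 ≤ 1 := by nlinarith [sq_nonneg l]
  have e1 : v - (u + l * u ^ 2 + l ^ 2 * u ^ 3) = l ^ 3 * (u ^ 3 * v) := by
    linear_combination (1 + l * u + l ^ 2 * u ^ 2) * hv
  have e2 : v ^ 2 - (u ^ 2 + 2 * l * u ^ 3) = l ^ 2 * (u ^ 2 * (v * (v + 2 * u))) := by
    linear_combination ((v + u) + l * u * (v + 2 * u)) * hv
  have e3 : v ^ 3 - u ^ 3 = l * (u * (v * (v ^ 2 + u * v + u ^ 2))) := by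
    linear_combination (v ^ 2 + u * v + u ^ 2) * hv
  have b1 : 0 ≤ v - (u + l * u ^ 2 + l ^ 2 * u ^ 3) ∧
      v - (u + l * u ^ 2 + l ^ 2 * u ^ 3) ≤ 2 * u ^ 4 := by
    rw [e1]
    refine ⟨by positivity, ?_⟩
    calc l ^ 3 * (u ^ 3 * v) ≤ 1 * (u ^ 3 * (2 * u)) := by gcongr
      _ = _ := by ring
  have b2 : 0 ≤ v ^ 2 - (u ^ 2 + 2 * l * u ^ 3) ∧
      v ^ 2 - (u ^ 2 + 2 * l * u ^ 3) ≤ 8 * u ^ 4 := by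
    rw [e2]
    refine ⟨by positivity, ?_⟩
    calc l ^ 2 * (u ^ 2 * (v * (v + 2 * u))) ≤ 1 * (u ^ 2 * ((2 * u) * (2 * u + 2 * u))) := by
          gcongr
      _ = _ := by ring
  have b3 : 0 ≤ v ^ 3 - u ^ 3 ∧ v ^ 3 - u ^ 3 ≤ 14 * u ^ 4 := by
    rw [e3]
    refine ⟨by positivity, ?_⟩
    calc l * (u * (v * (v ^ 2 + u * v + u ^ 2))) ≤
        1 * (u * ((2 * u) * ((2 * u) ^ 2 + u * (2 * u) + u ^ 2))) := by gcongr
      _ = _ := by ring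
  have b4 : K * v ^ 4 ≤ 16 * K * u ^ 4 := by
    calc K * v ^ 4 ≤ K * (2 * u) ^ 4 := by gcongr
      _ = _ := by ring
  set q := u + (1 - l) * u ^ 2 + (2 - 2 * l - l ^ 2) * u ^ 3 with hq
  have hm : |2 * P - Q - q| ≤ (18 * K + 40) * u ^ 4 := by
    rw [abs_le] at hP hQ ⊢
    rw [hq]
    constructor <;> nlinarith [pow_pos hu0 4]
  have hu2 : u ^ 2 ≤ 1 := by nlinarith
  have hu42 : u ^ 4 ≤ u ^ 2 := by nlinarith [sq_nonneg u]
  have hu4 : 0 < u ^ 4 := by positivity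
  have hu34 : u ^ 3 ≤ u ^ 2 := by nlinarith [sq_nonneg u]
  constructor
  · have h1 : |q - u| ≤ 10 * u ^ 2 := by
      have e : q - u = (1 - l) * u ^ 2 + (2 - 2 * l - l ^ 2) * u ^ 3 := by rw [hq]; ring
      rw [e]
      have h2 : |(1 - l) * u ^ 2| ≤ 1 * u ^ 2 := by
        rw [abs_mul, abs_of_nonneg (sq_nonneg u)]
        gcongr
        rw [abs_le]; constructor <;> linarith
      have h3 : |(2 - 2 * l - l ^ 2) * u ^ 3| ≤ 3 * u ^ 2 := by
        rw [abs_mul, abs_of_pos (by positivity : 0 < u ^ 3)]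
        gcongr
        rw [abs_le]; constructor <;> nlinarith
      refine (abs_add_le _ _).trans ?_
      linarith [sq_nonneg u]
    calc |2 * P - Q - u| ≤ |2 * P - Q - q| + |q - u| := abs_sub_le _ _ _
      _ ≤ (18 * K + 40) * u ^ 2 + 10 * u ^ 2 := by
        refine add_le_add (hm.trans ?_) h1
        gcongr
      _ = _ := by ring
  · set S := 1 + l * u + (2 * l ^ 2 + l) * u ^ 2 with hS
    have hS0 : 0 < S := by positivity
    have hS5 : S ≤ 5 := by
      have : (2 * l ^ 2 + l) * u ^ 2 ≤ 3 * 1 := by gcongr; linarith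
      rw [hS]; linarith
    have e : P - (2 * P - Q) * S = (P - (u + u ^ 2 + 2 * u ^ 3)) - (2 * P - Q - q) * S +
        (-(((1 - l) * (2 * l ^ 2 + l) + (2 - 2 * l - l ^ 2) * l) +
          (2 - 2 * l - l ^ 2) * (2 * l ^ 2 + l) * u) * u ^ 4) := by
      rw [hq, hS]; ring
    have h1 : |(2 * P - Q - q) * S| ≤ (18 * K + 40) * u ^ 4 * 5 := by
      rw [abs_mul, abs_of_pos hS0]
      gcongr
    have c0 : |1 - l| ≤ 1 := by rw [abs_le]; constructor <;> linarith
    have c1 : |2 * l ^ 2 + l| ≤ 3 := by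
      rw [abs_of_pos (by positivity)]; linarith
    have c2 : |2 - 2 * l - l ^ 2| ≤ 3 := by rw [abs_le]; constructor <;> nlinarith
    have c3 : |l| ≤ 1 := by rw [abs_of_pos hl0]; exact hl1.le
    have c4 : |u| ≤ 1 := by rw [abs_of_pos hu0]; linarith
    have h2 : |-(((1 - l) * (2 * l ^ 2 + l) + (2 - 2 * l - l ^ 2) * l) +
          (2 - 2 * l - l ^ 2) * (2 * l ^ 2 + l) * u) * u ^ 4| ≤ 15 * u ^ 4 := by
      rw [abs_mul, abs_neg, abs_of_pos hu4]
      refine mul_le_mul_of_nonneg_right ?_ hu4.le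
      refine (abs_add_le _ _).trans ?_
      have := abs_add_le ((1 - l) * (2 * l ^ 2 + l)) ((2 - 2 * l - l ^ 2) * l)
      have d1 : |(1 - l) * (2 * l ^ 2 + l)| ≤ 1 * 3 := by
        rw [abs_mul]; exact mul_le_mul c0 c1 (abs_nonneg _) (by norm_num)
      have d2 : |(2 - 2 * l - l ^ 2) * l| ≤ 3 * 1 := by
        rw [abs_mul]; exact mul_le_mul c2 c3 (abs_nonneg _) (by norm_num)
      have d3 : |(2 - 2 * l - l ^ 2) * (2 * l ^ 2 + l) * u| ≤ 3 * 3 * 1 := by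
        rw [abs_mul, abs_mul]
        exact mul_le_mul (mul_le_mul c2 c1 (abs_nonneg _) (by norm_num)) c4 (abs_nonneg _)
          (by norm_num)
      linarith
    rw [e]
    refine (abs_add_le _ _).trans ?_
    have := abs_sub (P - (u + u ^ 2 + 2 * u ^ 3)) ((2 * P - Q - q) * S)
    have hKu : 0 ≤ K * u ^ 4 := by positivity
    linarith

/-- Passing from expansions in `1 / log R_n` to expansions in `1 / log n`: here `N = log n`,
`M = log (log n)` and `L = log R_n`. -/
lemma change_of_scale {l N M L c : ℝ} (hl0 : 0 < l) (hl1 : l < 1) (hM : 1 ≤ M) (hMN : M ^ 2 ≤ N)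
    (hc : 0 ≤ c) (hL : N ≤ L) (hD : |L - N - M - l| ≤ c * M / N) :
    |(1 + l / L + (2 * l ^ 2 + l) / L ^ 2) -
      (1 + l / N - (l * M - l ^ 2 - l) / N ^ 2 + l * M ^ 2 / N ^ 3)| ≤
      100 * (c + 1) ^ 3 * (M / N ^ 3) := by
  obtain ⟨D, rfl⟩ : ∃ D, L = N + D := ⟨L - N, by ring⟩
  have hM0 : 0 < M := by linarith
  have hMN' : M ≤ N := by nlinarith
  have hN1 : 1 ≤ N := by linarith
  have hN0 : 0 < N := by linarith
  have hD0 : 0 ≤ D := by linarith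
  have hLp : 0 < N + D := by linarith
  have hD' : |D - (M + l)| ≤ c * M / N := by
    rwa [show D - (M + l) = N + D - N - M - l by ring]
  have hcM : c * M / N ≤ c := by
    rw [div_le_iff₀ hN0]; gcongr
  have hDc : |D - M| ≤ c + 1 := by
    have := abs_le.1 (hD'.trans hcM)
    rw [abs_le]; constructor <;> linarith
  have hDM : D ≤ (c + 2) * M := by
    have := (abs_le.1 hDc).2
    nlinarith
  have hl2 : l ^ 2 ≤ 1 := by nlinarith
  -- exact remainders of the geometric expansions of `1 / (N + D)` and `1 / (N + D) ^ 2`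
  have e : (1 + l / (N + D) + (2 * l ^ 2 + l) / (N + D) ^ 2) -
      (1 + l / N - (l * M - l ^ 2 - l) / N ^ 2 + l * M ^ 2 / N ^ 3) =
      -(l * D ^ 3 / (N ^ 3 * (N + D))) + (-(l * ((D - (M + l)) / N ^ 2))) +
      l * (D - M) * (D + M) / N ^ 3 +
      (-((2 * l ^ 2 + l) * (D * (2 * N + D) / (N ^ 2 * (N + D) ^ 2)))) := by
    field_simp
    ring
  have r1 : |-(l * D ^ 3 / (N ^ 3 * (N + D)))| ≤ (c + 2) ^ 3 * (M / N ^ 3) := by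
    rw [abs_neg, abs_of_nonneg (by positivity), div_le_iff₀ (by positivity)]
    calc l * D ^ 3 ≤ 1 * ((c + 2) * M) ^ 3 := by gcongr
      _ = (c + 2) ^ 3 * M * M ^ 2 := by ring
      _ ≤ (c + 2) ^ 3 * M * (N + D) := by gcongr; linarith
      _ = _ := by field_simp
  have r2 : |-(l * ((D - (M + l)) / N ^ 2))| ≤ c * (M / N ^ 3) := by
    rw [abs_neg, abs_mul, abs_of_pos hl0, abs_div, abs_of_pos (by positivity : 0 < N ^ 2)]
    calc l * (|D - (M + l)| / N ^ 2) ≤ 1 * (c * M / N / N ^ 2) := by gcongr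
      _ = _ := by field_simp
  have r3 : |l * (D - M) * (D + M) / N ^ 3| ≤ (c + 1) * (c + 3) * (M / N ^ 3) := by
    rw [abs_div, abs_mul, abs_mul, abs_of_pos hl0, abs_of_pos (by positivity : 0 < N ^ 3),
      abs_of_pos (by positivity : 0 < D + M), ← mul_div_assoc]
    refine div_le_div_of_nonneg_right ?_ (by positivity)
    calc l * |D - M| * (D + M) ≤ 1 * (c + 1) * ((c + 2) * M + M) := by gcongr
      _ = _ := by ring
  have r4 : |-((2 * l ^ 2 + l) * (D * (2 * N + D) / (N ^ 2 * (N + D) ^ 2)))| ≤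
      6 * (c + 2) * (M / N ^ 3) := by
    rw [abs_neg, abs_of_nonneg (by positivity)]
    have h1 : D * (2 * N + D) / (N ^ 2 * (N + D) ^ 2) ≤ 2 * (c + 2) * (M / N ^ 3) := by
      rw [← mul_div_assoc, div_le_div_iff₀ (by positivity) (by positivity)]
      calc D * (2 * N + D) * N ^ 3 ≤ (c + 2) * M * (2 * (N + D)) * N ^ 3 := by
            gcongr; linarith
        _ = 2 * (c + 2) * M * (N ^ 2 * ((N + D) * N)) := by ring
        _ ≤ 2 * (c + 2) * M * (N ^ 2 * ((N + D) * (N + D))) := by gcongr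
        _ = _ := by ring
    calc _ ≤ 3 * (2 * (c + 2) * (M / N ^ 3)) := by gcongr; linarith
      _ = _ := by ring
  rw [e]
  have hMN3 : 0 < M / N ^ 3 := by positivity
  have s1 := abs_add_le (-(l * D ^ 3 / (N ^ 3 * (N + D))) + (-(l * ((D - (M + l)) / N ^ 2))) +
      l * (D - M) * (D + M) / N ^ 3)
      (-((2 * l ^ 2 + l) * (D * (2 * N + D) / (N ^ 2 * (N + D) ^ 2))))
  have s2 := abs_add_three (-(l * D ^ 3 / (N ^ 3 * (N + D)))) (-(l * ((D - (M + l)) / N ^ 2)))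
      (l * (D - M) * (D + M) / N ^ 3)
  have hcoef : (c + 2) ^ 3 + c + (c + 1) * (c + 3) + 6 * (c + 2) ≤ 100 * (c + 1) ^ 3 := by
    nlinarith [pow_nonneg hc 3, pow_nonneg hc 2]
  calc _ ≤ ((c + 2) ^ 3 + c + (c + 1) * (c + 3) + 6 * (c + 2)) * (M / N ^ 3) := by linarith
    _ ≤ _ := by gcongr

/-- The count `m = π(x) - π(x/2)` compared with `x` and with `π(x)`. -/
lemma primePi_sub_half : ∃ K : ℝ, 0 < K ∧ ∀ x : ℝ, Real.exp 9 ≤ x →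
    |2 * ((primePi x : ℝ) - primePi (x / 2)) - x / log x| ≤ K * (x / (log x) ^ 2) ∧
    |(primePi x : ℝ) - 2 * ((primePi x : ℝ) - primePi (x / 2)) *
      (1 + log 2 / log x + (2 * log 2 ^ 2 + log 2) / (log x) ^ 2)| ≤ K * (x / (log x) ^ 4) := by
  obtain ⟨K, hK, h⟩ := primePi_asymptotic
  refine ⟨100 * K + 400, by positivity, fun x hx => ?_⟩
  have hx0 : 0 < x := (Real.exp_pos 9).trans_le hx
  obtain ⟨hl0, hl1⟩ := log_two_bounds
  have hL9 : 9 ≤ log x := by rw [Real.le_log_iff_exp_le hx0]; exact hx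
  have hL0 : 0 < log x := by linarith
  have hx2 : Real.exp 8 ≤ x / 2 := by
    have e : Real.exp 9 = Real.exp 1 * Real.exp 8 := by rw [← Real.exp_add]; norm_num
    rw [e] at hx
    nlinarith [Real.add_one_le_exp 1, Real.exp_pos 8]
  have h8 : Real.exp 8 ≤ x := by linarith
  have p1 := h x h8
  have p2 := h (x / 2) hx2
  have hlog : log (x / 2) = log x - log 2 := Real.log_div hx0.ne' (by norm_num)
  rw [hlog] at p2
  have hLl : 0 < log x - log 2 := by linarith
  set L := log x
  set l := log 2
  have key := expansion_core (l := l) (u := 1 / L) (v := 1 / (L - l)) (P := primePi x / x)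
    (Q := 2 * primePi (x / 2) / x) (K := K) hl0 hl1 (by positivity)
    (by rw [div_le_div_iff₀ hL0 (by norm_num)]; linarith) (by field_simp; ring) hK.le
    (by
      have e : (primePi x : ℝ) / x - (1 / L + (1 / L) ^ 2 + 2 * (1 / L) ^ 3) =
        (primePi x - x * (1 / L + 1 / L ^ 2 + 2 / L ^ 3)) / x := by
        field_simp
      rw [e, abs_div, abs_of_pos hx0, div_le_iff₀ hx0]
      refine p1.trans (le_of_eq ?_)
      field_simp)
    (by
      have e : 2 * (primePi (x / 2) : ℝ) / x -
          (1 / (L - l) + (1 / (L - l)) ^ 2 + 2 * (1 / (L - l)) ^ 3) =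
        (primePi (x / 2) - x / 2 * (1 / (L - l) + 1 / (L - l) ^ 2 + 2 / (L - l) ^ 3)) /
          (x / 2) := by
        field_simp
      rw [e, abs_div, abs_of_pos (by positivity : 0 < x / 2), div_le_iff₀ (by positivity)]
      refine p2.trans (le_of_eq ?_)
      field_simp)
  obtain ⟨k1, k2⟩ := key
  constructor
  · have e : 2 * ((primePi x : ℝ) - primePi (x / 2)) - x / L =
      x * (2 * (primePi x / x) - 2 * primePi (x / 2) / x - 1 / L) := by field_simp
    rw [e, abs_mul, abs_of_pos hx0]
    calc _ ≤ x * ((18 * K + 50) * (1 / L) ^ 2) := by gcongr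
      _ ≤ x * ((100 * K + 400) * (1 / L) ^ 2) := by gcongr <;> norm_num
      _ = _ := by field_simp
  · have e : (primePi x : ℝ) - 2 * ((primePi x : ℝ) - primePi (x / 2)) *
        (1 + l / L + (2 * l ^ 2 + l) / L ^ 2) =
      x * (primePi x / x - (2 * (primePi x / x) - 2 * primePi (x / 2) / x) *
        (1 + l * (1 / L) + (2 * l ^ 2 + l) * (1 / L) ^ 2)) := by field_simp
    rw [e, abs_mul, abs_of_pos hx0]
    calc _ ≤ x * ((100 * K + 400) * (1 / L) ^ 4) := by gcongr
      _ = _ := by field_simp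

lemma primePi_mono : Monotone primePi := fun _ _ h =>
  Nat.monotone_primeCounting (Nat.floor_mono h)

lemma primePi_natCast (m : ℕ) : primePi (m : ℝ) = Nat.primeCounting m := by
  simp [primePi]

/-- The set whose minimum is the `n`-th Ramanujan prime is nonempty, because
`π(x) - π(x/2)` is at least `x / (4 * log x)` for large `x`. -/
lemma ramanujan_set_nonempty (n : ℕ) :
    {R : ℕ | 0 < R ∧ ∀ x : ℝ, (R : ℝ) ≤ x → primePi (x / 2) + n ≤ primePi x}.Nonempty := by
  obtain ⟨K, hK, h⟩ := primePi_sub_half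
  set B := max (max (Real.exp 9) (Real.exp (2 * K))) (64 * (n : ℝ) ^ 2)
  refine ⟨⌈B⌉₊ + 1, Nat.succ_pos _, fun x hx => ?_⟩
  have hB : B ≤ x := by
    have := Nat.le_ceil B
    push_cast at hx
    linarith
  have h9 : Real.exp 9 ≤ x := ((le_max_left _ _).trans (le_max_left _ _)).trans hB
  have h2K : Real.exp (2 * K) ≤ x := ((le_max_right _ _).trans (le_max_left _ _)).trans hB
  have h64 : 64 * (n : ℝ) ^ 2 ≤ x := (le_max_right _ _).trans hB
  have hx0 : 0 < x := (Real.exp_pos 9).trans_le h9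
  have hL9 : 9 ≤ log x := by rw [Real.le_log_iff_exp_le hx0]; exact h9
  have hLK : 2 * K ≤ log x := by rw [Real.le_log_iff_exp_le hx0]; exact h2K
  have hL0 : 0 < log x := by linarith
  have h1 := (abs_le.1 (h x h9).1).1
  have h2 : K * (x / log x ^ 2) ≤ x / log x / 2 := by
    rw [div_div, ← mul_div_assoc, div_le_div_iff₀ (by positivity) (by positivity)]
    have : 0 ≤ x * log x * (log x - 2 * K) :=
      mul_nonneg (by positivity) (by linarith)
    nlinarith
  have hsq : 0 < √x := Real.sqrt_pos.2 hx0
  have hxs : √x * √x = x := Real.mul_self_sqrt hx0.le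
  have hlog : log x ≤ 2 * √x := by
    have e : log x = 2 * log √x := by rw [Real.log_sqrt hx0.le]; ring
    rw [e]
    linarith [Real.log_le_sub_one_of_pos hsq]
  have h3 : √x / 2 ≤ x / log x := by
    rw [div_le_div_iff₀ (by norm_num) hL0]
    nlinarith
  have h4 : 8 * (n : ℝ) ≤ √x := by
    apply Real.le_sqrt_of_sq_le
    linarith
  have : (primePi (x / 2) : ℝ) + n ≤ primePi x := by linarith
  exact_mod_cast this

lemma ramanujanPrime_mem (n : ℕ) : 0 < ramanujanPrime n ∧
    ∀ x : ℝ, (ramanujanPrime n : ℝ) ≤ x → primePi (x / 2) + n ≤ primePi x :=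
  Nat.sInf_mem (ramanujan_set_nonempty n)

/-- At a Ramanujan prime the bound `π(x) - π(x/2) ≥ n` is attained: just below `R_n` it fails
somewhere, and passing to `R_n` increases `π` by at most one. -/
lemma primePi_ramanujanPrime (n : ℕ) (hn : 1 ≤ n) :
    primePi (ramanujanPrime n) = primePi ((ramanujanPrime n : ℝ) / 2) + n := by
  obtain ⟨h0, h⟩ := ramanujanPrime_mem n
  refine le_antisymm ?_ (h _ le_rfl)
  set R := ramanujanPrime n with hR
  obtain ⟨r, hr⟩ : ∃ r, R = r + 1 := ⟨R - 1, by omega⟩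
  have hr0 : 0 < r := by
    rcases Nat.eq_zero_or_pos r with h' | h'
    · have := h R le_rfl
      rw [primePi_natCast, hr, h'] at this
      have h1 : Nat.primeCounting (0 + 1) = 0 := Nat.primeCounting_one
      omega
    · exact h'
  have hnot : ¬ (0 < r ∧ ∀ x : ℝ, (r : ℝ) ≤ x → primePi (x / 2) + n ≤ primePi x) :=
    Nat.notMem_of_lt_sInf (s := {R : ℕ | 0 < R ∧ ∀ x : ℝ, (R : ℝ) ≤ x →
      primePi (x / 2) + n ≤ primePi x}) (show r < R by omega)
  push Not at hnot
  obtain ⟨x, hx, hlt⟩ := hnot hr0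
  have hxR : x < R := by
    by_contra! hc
    exact absurd (h x hc) (by omega)
  have h1 : primePi r ≤ primePi x := primePi_mono hx
  have h2 : primePi (x / 2) ≤ primePi ((R : ℝ) / 2) := primePi_mono (by linarith)
  have h3 : primePi R ≤ primePi r + 1 := by
    rw [primePi_natCast, primePi_natCast, hr]
    unfold Nat.primeCounting Nat.primeCounting'
    rw [Nat.count_succ Nat.Prime (r + 1)]
    split_ifs <;> omega
  omega

lemma le_ramanujanPrime (n : ℕ) : n ≤ ramanujanPrime n := by
  have h := (ramanujanPrime_mem n).2 _ le_rfl
  rw [primePi_natCast] at h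
  have : ∀ m, Nat.primeCounting m ≤ m := by
    intro m
    induction m with
    | zero => simp
    | succ k ih =>
      unfold Nat.primeCounting Nat.primeCounting' at ih ⊢
      rw [Nat.count_succ]
      split_ifs <;> omega
  have := this (ramanujanPrime n)
  omega

/-- The size of `R` in terms of `n`, when `2 * n` is close to `R / log R`: with `N = log n`,
`M = log (log n)` and `L = log R`. -/
lemma log_ramanujan_aux {n R K : ℝ} (hn : 0 < n) (hR : 0 < R) (hK : 0 < K)
    (hNL : log n ≤ log R) (hM : 1 ≤ log (log n)) (hMN : 8 * log (log n) ≤ log n)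
    (hKN : 2 * K ≤ log n)
    (h : |2 * n - R / log R| ≤ K * (R / (log R) ^ 2)) :
    |log R - log n - log (log n) - log 2| ≤ (4 + 2 * K) * log (log n) / log n ∧
      R / log R ≤ 2 * (2 * n) := by
  obtain ⟨hl0, hl1⟩ := log_two_bounds
  have hN0 : 0 < log n := by linarith
  have hL0 : 0 < log R := by linarith
  set N := log n with hN
  set L := log R with hL
  set M := log N with hMdef
  obtain ⟨ε, hε⟩ : ∃ ε, ε = 2 * n / (R / L) - 1 := ⟨_, rfl⟩
  have hRL : 0 < R / L := by positivity
  have hn2 : 2 * n = R / L * (1 + ε) := by rw [hε]; field_simp; ring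
  have hεK : |ε| ≤ K / L := by
    have e : 2 * n - R / L = R / L * ε := by rw [hn2]; ring
    rw [e, abs_mul, abs_of_pos hRL] at h
    have e2 : K * (R / L ^ 2) = R / L * (K / L) := by field_simp
    rw [e2] at h
    exact le_of_mul_le_mul_left h hRL
  have hKL : K / L ≤ K / N := div_le_div_of_nonneg_left hK.le hN0 hNL
  have hKN2 : K / N ≤ 1 / 2 := by rw [div_le_div_iff₀ hN0 (by norm_num)]; linarith
  have hε2 : |ε| ≤ 1 / 2 := by linarith
  have hε1 := abs_le.1 hε2
  have h1ε : 0 < 1 + ε := by linarith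
  have hlog : log (1 + ε) ≤ |ε| ∧ -(2 * |ε|) ≤ log (1 + ε) := by
    constructor
    · have := Real.log_le_sub_one_of_pos h1ε
      linarith [le_abs_self ε]
    · have := Real.one_sub_inv_le_log_of_pos h1ε
      have e : 1 - (1 + ε)⁻¹ = ε / (1 + ε) := by field_simp; ring
      rw [e] at this
      refine le_trans ?_ this
      rw [le_div_iff₀ h1ε]
      nlinarith [neg_abs_le ε, abs_nonneg ε]
  have hmain : log 2 + N = L - log L + log (1 + ε) := by
    rw [hN, ← Real.log_mul (by norm_num) hn.ne', hn2,
      Real.log_mul hRL.ne' h1ε.ne', Real.log_div hR.ne' hL0.ne']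
  have hlogL : log L ≤ L / 8 + 3 := by
    have e : log L = log (L / 8) + 3 * log 2 := by
      rw [Real.log_div hL0.ne' (by norm_num),
        show (8 : ℝ) = 2 ^ 3 by norm_num, Real.log_pow]
      push_cast; ring
    have := Real.log_le_sub_one_of_pos (show 0 < L / 8 by positivity)
    rw [e]; linarith
  have hL2 : L ≤ 2 * N := by linarith
  have hlogL2 : log L ≤ M + log 2 := by
    have := Real.log_le_log hL0 hL2
    rw [Real.log_mul (by norm_num) hN0.ne'] at this
    linarith
  have hD : L - N ≤ 4 * M := by linarith
  have hMlog : M ≤ log L := Real.log_le_log hN0 hNL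
  have hLM : log L - M ≤ (L - N) / N := by
    have e : log L - M = log (L / N) := by rw [Real.log_div hL0.ne' hN0.ne']
    have := Real.log_le_sub_one_of_pos (show 0 < L / N by positivity)
    rw [e]
    have e2 : L / N - 1 = (L - N) / N := by field_simp
    linarith
  have hLM' : log L - M ≤ 4 * M / N := hLM.trans (by gcongr)
  constructor
  · have e : L - N - M - log 2 = (log L - M) - log (1 + ε) := by linarith
    have hKM : K / N ≤ K * M / N := by
      gcongr
      nlinarith
    have e3 : (4 + 2 * K) * M / N = 4 * M / N + 2 * (K * M / N) := by ring
    rw [e, abs_le, e3]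
    constructor <;> linarith [abs_nonneg ε, show 0 ≤ 4 * M / N by positivity]
  · rw [hn2]
    nlinarith

/-- The expansion for all sufficiently large `n`. -/
lemma pi_ramanujanPrime_large : ∃ C : ℝ, 0 < C ∧ ∀ᶠ n : ℕ in Filter.atTop,
      |(primePi (ramanujanPrime n) : ℝ) -
        2 * n * (1 + Real.log 2 / Real.log n
          - (Real.log 2 * Real.log (Real.log n) - (Real.log 2) ^ 2 - Real.log 2)
              / (Real.log n) ^ 2
          + Real.log 2 * (Real.log (Real.log n)) ^ 2 / (Real.log n) ^ 3)| ≤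
        C * (2 * n * Real.log (Real.log n) / (Real.log n) ^ 3) := by
  obtain ⟨K, hK, h⟩ := primePi_sub_half
  refine ⟨2 * K + 100 * (4 + 2 * K + 1) ^ 3, by positivity, ?_⟩
  have t1 : Filter.Tendsto (fun n : ℕ => log n) Filter.atTop Filter.atTop :=
    Real.tendsto_log_atTop.comp tendsto_natCast_atTop_atTop
  have t2 : Filter.Tendsto (fun n : ℕ => log (log n)) Filter.atTop Filter.atTop :=
    Real.tendsto_log_atTop.comp t1
  have t3 : ∀ᶠ y : ℝ in Filter.atTop, (log y) ^ 2 ≤ y := by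
    have := (Real.isLittleO_pow_log_id_atTop (n := 2)).bound (show (0 : ℝ) < 1 by norm_num)
    filter_upwards [this, Filter.eventually_ge_atTop 0] with y hy hy0
    simpa [abs_of_nonneg hy0] using hy
  filter_upwards [t1.eventually_ge_atTop 9, t1.eventually_ge_atTop (2 * K),
    t2.eventually_ge_atTop 8, t1.eventually t3, Filter.eventually_ge_atTop 1]
    with n hN9 hNK hM8 hMN hn1
  have hn0 : (0 : ℝ) < n := by exact_mod_cast hn1
  have hnR : (n : ℝ) ≤ ramanujanPrime n := by exact_mod_cast le_ramanujanPrime n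
  have hpi := primePi_ramanujanPrime n hn1
  set R : ℝ := (ramanujanPrime n : ℝ) with hR
  have hR0 : 0 < R := by linarith
  have hNL : log n ≤ log R := Real.log_le_log hn0 hnR
  have hRe : Real.exp 9 ≤ R := by
    rw [← Real.le_log_iff_exp_le hR0]; linarith
  obtain ⟨a, b⟩ := h R hRe
  have hm : (primePi R : ℝ) - primePi (R / 2) = n := by
    rw [hpi]; push_cast; ring
  rw [hm] at a b
  obtain ⟨d, hsize⟩ := log_ramanujan_aux hn0 hR0 hK hNL (by linarith) (by nlinarith) hNK a
  obtain ⟨hl0, hl1⟩ := log_two_bounds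
  have s := change_of_scale hl0 hl1 (by linarith) hMN (by positivity) hNL d
  set N := log (n : ℝ)
  set L := log R
  set M := log N
  have hN0 : 0 < N := by linarith
  have hL0 : 0 < L := by linarith
  have b' : K * (R / L ^ 4) ≤ 2 * K * (2 * n * M / N ^ 3) := by
    calc K * (R / L ^ 4) = K * (R / L) / L ^ 3 := by field_simp
      _ ≤ K * (2 * (2 * n)) / N ^ 3 := by gcongr
      _ ≤ K * (2 * (2 * n)) * M / N ^ 3 := by
        refine div_le_div_of_nonneg_right ?_ (by positivity)
        exact le_mul_of_one_le_right (by positivity) (by linarith)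
      _ = _ := by ring
  calc _ ≤ _ := abs_sub_le _ (2 * n * (1 + log 2 / L + (2 * log 2 ^ 2 + log 2) / L ^ 2)) _
    _ ≤ 2 * K * (2 * n * M / N ^ 3) + 2 * n * (100 * (4 + 2 * K + 1) ^ 3 * (M / N ^ 3)) := by
      refine add_le_add (b.trans b') ?_
      rw [← mul_sub, abs_mul, abs_of_pos (by positivity : (0 : ℝ) < 2 * n)]
      gcongr
    _ = _ := by ring

theorem pi_ramanujanPrime_asymptotic :
    ∃ C : ℝ, 0 < C ∧ ∀ n : ℕ, 3 ≤ n →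
      |(primePi (ramanujanPrime n) : ℝ) -
        2 * n * (1 + Real.log 2 / Real.log n
          - (Real.log 2 * Real.log (Real.log n) - (Real.log 2) ^ 2 - Real.log 2)
              / (Real.log n) ^ 2
          + Real.log 2 * (Real.log (Real.log n)) ^ 2 / (Real.log n) ^ 3)| ≤
        C * (2 * n * Real.log (Real.log n) / (Real.log n) ^ 3) := by
  obtain ⟨C, hC, h⟩ := pi_ramanujanPrime_large
  obtain ⟨n₀, hn₀⟩ := Filter.eventually_atTop.1 h
  -- the finitely many `3 ≤ n < n₀` are absorbed in the constant, as `log (log n) > 0`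
  set A : ℕ → ℝ := fun n => |(primePi (ramanujanPrime n) : ℝ) -
        2 * n * (1 + Real.log 2 / Real.log n
          - (Real.log 2 * Real.log (Real.log n) - (Real.log 2) ^ 2 - Real.log 2)
              / (Real.log n) ^ 2
          + Real.log 2 * (Real.log (Real.log n)) ^ 2 / (Real.log n) ^ 3)| with hA
  set B : ℕ → ℝ := fun n => 2 * n * Real.log (Real.log n) / (Real.log n) ^ 3 with hB
  have hBpos : ∀ n : ℕ, 3 ≤ n → 0 < B n := by
    intro n hn
    have hn3 : (3 : ℝ) ≤ n := by exact_mod_cast hn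
    have h1 : 1 < log n := by
      rw [Real.lt_log_iff_exp_lt (by linarith)]
      linarith [Real.exp_one_lt_d9]
    have h2 : 0 < log (log n) := Real.log_pos h1
    have h3 : 0 < log (n : ℝ) := by linarith
    simp only [hB]
    positivity
  have hS : 0 ≤ ∑ k ∈ Finset.range n₀, A k / |B k| :=
    Finset.sum_nonneg fun k _ => div_nonneg (abs_nonneg _) (abs_nonneg _)
  refine ⟨C + ∑ k ∈ Finset.range n₀, A k / |B k|, by positivity, fun n hn => ?_⟩
  change A n ≤ _ * B n
  have hBn := hBpos n hn
  rcases le_or_gt n₀ n with hle | hlt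
  · calc A n ≤ C * B n := hn₀ n hle
      _ ≤ _ := by gcongr; linarith
  · have h1 : A n / |B n| ≤ ∑ k ∈ Finset.range n₀, A k / |B k| :=
      Finset.single_le_sum (f := fun k => A k / |B k|)
        (fun k _ => div_nonneg (abs_nonneg _) (abs_nonneg _)) (Finset.mem_range.2 hlt)
    rw [abs_of_pos hBn, div_le_iff₀ hBn] at h1
    nlinarith
end

section
/- Let n ≥ 1 be an integer and write R_n = p_s with s = π(R_n). Then p_s < 2·p_{s−n+1}. -/
/-! Put `R = ramanujanPrime n`, so that `s = π(R)` and `p_s ≤ R`. The defining property of `R`,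
taken at `x = R`, gives `π(R / 2) ≤ s - n`. Hence the prime `p_{s-n+1}` is not among those up to
`R / 2`, that is, `2 * p_{s-n+1} > R ≥ p_s`. Only the defining inequality at `R` is used; the
primality and the minimality of `R` play no role. If the set defining `R` were empty, then `R`
would be the junk value `0` and the claim would read `2 < 2 * 2`, so the existence of Ramanujan
primes need not be established here. -/

open Real

theorem yang_togbe_lemma (n : ℕ) (hn : 1 ≤ n) (s : ℕ) (hs : s = primePi (ramanujanPrime n)) :
    nthPrime s < 2 * nthPrime (s - n + 1) := by
  rcases Set.eq_empty_or_nonempty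
    {R : ℕ | 0 < R ∧ ∀ x : ℝ, (R : ℝ) ≤ x → primePi (x / 2) + n ≤ primePi x} with he | hne
    -- `sInf ∅ = 0`, hence `s = 0`, and both indices truncate to that of the prime `2`.
  · have hR : ramanujanPrime n = 0 := by
      rw [ramanujanPrime, he, Nat.sInf_empty]
    have h0 : s = 0 := by
      simp [hs, hR, primePi]
    subst h0
    simp [nthPrime]
  · obtain ⟨-, hx⟩ := Nat.sInf_mem hne
    change ∀ x : ℝ, (ramanujanPrime n : ℝ) ≤ x → _ at hx
    have h := hx _ le_rfl
    rw [← hs] at h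
    have hfloor : ⌊(ramanujanPrime n : ℝ) / 2⌋₊ = ramanujanPrime n / 2 := by
      simpa using Nat.floor_div_ofNat (ramanujanPrime n : ℝ) 2
    rw [primePi, hfloor, Nat.primeCounting, Nat.primeCounting'] at h
    rw [primePi, Nat.floor_natCast, Nat.primeCounting, Nat.primeCounting'] at hs
    have hle : nthPrime s < ramanujanPrime n + 1 :=
      Nat.nth_lt_of_lt_count (by omega)
    have hgt : ramanujanPrime n / 2 + 1 ≤ nthPrime (s - n + 1) :=
      (Nat.count_le_iff_le_nth Nat.infinite_setOfPred_prime).1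
        (show Nat.count Nat.Prime _ ≤ s - n from Nat.le_sub_of_add_le h)
    omega
end

section
/- Let n ≥ 16 be an integer and define F₁ : (2n, 2.6n) → ℝ by F₁(x) = G(x) − 2·H(x − n), with G and H as in the context. Then F₁ is strictly decreasing on the open interval (2n, 2.6n). -/
/-!
Write `y = log x` and `w = log y`. The functions `G` and `H` are the members `c = 10.667` and
`c = 11.508` of one family, whose derivative is
`y + w + (w - 1) / y - (w ^ 2 - 4 * w + c - 6) / (2 * y ^ 2) + (w ^ 2 - 7 * w + c + 3) / y ^ 3`
(`hasDerivAt_family`). For `x ∈ (2n, 2.6n)` put `m = x - n`, so that `m > n ≥ 16` and `x < 2m`.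
The logarithms then satisfy `log x ≤ log m + log 2` and `log log x ≤ log log m + log 2 / log m`,
so the main term `2 (log m + log log m)` of `2 H'(m)` exceeds the main term
`log x + log log x` of `G'(x)` by at least about `2.8`. The correction terms are bounded crudely:
they contribute at most `1.37` to `G'(x)` (`derivG_le`) and at least `-1/2` to `H'(m)`
(`le_derivH`). Hence `G'(x) < 2 H'(m)`, and the difference is strictly decreasing.
-/


open Real

/-- `G(x)` from (3.1). -/
noncomputable def G (x : ℝ) : ℝ :=
  x * (Real.log x + Real.log (Real.log x) - 1
    + (Real.log (Real.log x) - 2) / Real.log x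
    - ((Real.log (Real.log x)) ^ 2 - 6 * Real.log (Real.log x) + 10.667)
        / (2 * (Real.log x) ^ 2))

/-- `H(x)` from (3.2). -/
noncomputable def H (x : ℝ) : ℝ :=
  x * (Real.log x + Real.log (Real.log x) - 1
    + (Real.log (Real.log x) - 2) / Real.log x
    - ((Real.log (Real.log x)) ^ 2 - 6 * Real.log (Real.log x) + 11.508)
        / (2 * (Real.log x) ^ 2))

/-- The derivative of the family containing `G` and `H`, as a function of `y = log x`
and `w = log (log x)`. -/
noncomputable def familyDeriv (c y w : ℝ) : ℝ :=
  y + w + (w - 1) / y - (w ^ 2 - 4 * w + c - 6) / (2 * y ^ 2) + (w ^ 2 - 7 * w + c + 3) / y ^ 3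

theorem hasDerivAt_family (c x : ℝ) (hx : 1 < x) :
    HasDerivAt (fun x : ℝ => x * (log x + log (log x) - 1 + (log (log x) - 2) / log x
      - ((log (log x)) ^ 2 - 6 * log (log x) + c) / (2 * (log x) ^ 2)))
      (familyDeriv c (log x) (log (log x))) x := by
  have hx0 : x ≠ 0 := by linarith
  have hy : log x ≠ 0 := (log_pos hx).ne'
  have h1 : HasDerivAt log x⁻¹ x := hasDerivAt_log hx0
  have h2 : HasDerivAt (fun x => log (log x)) (x⁻¹ / log x) x := h1.log hy
  have h3 := (hasDerivAt_id x).mul ((((h1.add h2).sub_const 1).add ((h2.sub_const 2).div h1 hy)).sub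
    ((((h2.pow 2).sub (h2.const_mul 6)).add_const c).div ((h1.pow 2).const_mul 2)
      (mul_ne_zero two_ne_zero (pow_ne_zero 2 hy))))
  refine h3.congr_deriv ?_
  simp only [familyDeriv, Pi.add_apply, Pi.sub_apply, Pi.div_apply, Pi.pow_apply, id]
  field_simp
  ring

theorem derivG_le {y w : ℝ} (hy : 2.77 ≤ y) (hw : 1 ≤ w) (hwy : w ≤ y - 1) :
    familyDeriv 10.667 y w ≤ y + w + 1.37 := by
  have hy0 : 0 < y := by linarith
  have h1 : (w - 1) / y ≤ 1 := by rw [div_le_one hy0]; linarith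
  have h2 : 0 ≤ (w ^ 2 - 4 * w + 10.667 - 6) / (2 * y ^ 2) :=
    div_nonneg (by nlinarith [sq_nonneg (w - 2)]) (by positivity)
  have h3 : (w ^ 2 - 7 * w + 10.667 + 3) / y ^ 3 ≤ 0.37 := by
    rw [div_le_iff₀ (by positivity)]
    have : w ^ 2 - 7 * w + 10.667 + 3 ≤ y ^ 2 := by nlinarith
    nlinarith [sq_nonneg y, mul_nonneg (sq_nonneg y) (sub_nonneg.2 hy)]
  unfold familyDeriv
  linarith

theorem le_derivH {v w : ℝ} (hv : 2.77 ≤ v) (hw : 1 ≤ w) (hwv : w ≤ v - 1) :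
    v + w - 0.5 ≤ familyDeriv 11.508 v w := by
  have hv0 : 0 < v := by linarith
  have h1 : 0 ≤ (w - 1) / v := div_nonneg (by linarith) hv0.le
  have h2 : (w ^ 2 - 4 * w + 11.508 - 6) / (2 * v ^ 2) ≤ 0.5 := by
    rw [div_le_iff₀ (by positivity)]
    nlinarith
  have h3 : 0 ≤ (w ^ 2 - 7 * w + 11.508 + 3) / v ^ 3 :=
    div_nonneg (by nlinarith [sq_nonneg (w - 3.5)]) (by positivity)
  unfold familyDeriv
  linarith

theorem log_bounds {t : ℝ} (ht : 16 ≤ t) :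
    2.77 ≤ log t ∧ 1 ≤ log (log t) ∧ log (log t) ≤ log t - 1 := by
  have h16 : log (16 : ℝ) = 4 * log 2 := by
    rw [show (16 : ℝ) = 2 ^ 4 by norm_num, log_pow]; norm_num
  have h1 : 2.77 ≤ log t := by
    have := log_le_log (by norm_num) ht
    linarith [log_two_gt_d9]
  have h0 : 0 < log t := by linarith
  refine ⟨h1, ?_, log_le_sub_one_of_pos h0⟩
  rw [le_log_iff_exp_le h0]
  linarith [exp_one_lt_d9]

theorem deriv_ineq {x m : ℝ} (hm : 16 ≤ m) (hmx : m ≤ x) (hx : x ≤ 2 * m) :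
    familyDeriv 10.667 (log x) (log (log x))
      < 2 * familyDeriv 11.508 (log m) (log (log m)) := by
  obtain ⟨a1, a2, a3⟩ := log_bounds (hm.trans hmx)
  obtain ⟨b1, b2, b3⟩ := log_bounds hm
  have hG := derivG_le a1 a2 a3
  have hH := le_derivH b1 b2 b3
  have hy : log x ≤ 0.7 + log m := by
    have := log_le_log (by linarith) hx
    rw [log_mul two_ne_zero (by linarith)] at this
    linarith [log_two_lt_d9]
  have hm0 : 0 < log m := by linarith
  have hx0 : 0 < log x := by linarith
  -- `log (log x / log m) ≤ log x / log m - 1`, where the ratio is at most `1 + 0.7 / 2.77`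
  have hw : log (log x) ≤ log (log m) + 0.26 := by
    have h := log_le_sub_one_of_pos (div_pos hx0 hm0)
    rw [log_div hx0.ne' hm0.ne'] at h
    have : log x / log m ≤ 1.26 := by
      rw [div_le_iff₀ hm0]; linarith
    linarith
  linarith

theorem F1_strictAntiOn (n : ℕ) (hn : 16 ≤ n) :
    StrictAntiOn (fun x : ℝ => G x - 2 * H (x - n))
      (Set.Ioo (2 * (n : ℝ)) (2.6 * (n : ℝ))) := by
  have hn' : (16 : ℝ) ≤ n := by exact_mod_cast hn
  have key : ∀ x ∈ Set.Ioo (2 * (n : ℝ)) (2.6 * (n : ℝ)),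
      HasDerivAt (fun x : ℝ => G x - 2 * H (x - n))
        (familyDeriv 10.667 (log x) (log (log x))
          - 2 * familyDeriv 11.508 (log (x - n)) (log (log (x - n)))) x := by
    intro x hx
    have hG : HasDerivAt G _ x := hasDerivAt_family 10.667 x (by linarith [hx.1])
    have hH : HasDerivAt H _ (x - n) := hasDerivAt_family 11.508 (x - n) (by linarith [hx.1])
    exact hG.sub ((hH.comp_sub_const x (n : ℝ)).const_mul 2)
  refine strictAntiOn_of_deriv_neg (convex_Ioo _ _)
    (fun x hx => (key x hx).continuousAt.continuousWithinAt) fun x hx => ?_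
  rw [interior_Ioo] at hx
  rw [(key x hx).deriv]
  have := deriv_ineq (x := x) (m := x - n) (by linarith [hx.1]) (by linarith) (by linarith [hx.1])
  linarith
end

section
/- Let n ≥ 15 be an integer and define F₂ : (2n, 2.6n) → ℝ by F₂(x) = H(x) − 2·G(x − n + 1), with G and H as in the context. Then F₂ is strictly decreasing on the open interval (2n, 2.6n). -/
/-!
Both `G` and `H` have the form `x * g(log x)`, differing only in a constant `c`, so with
`y = log x` their derivative is `g(y) + g'(y) = dPhi c y`, where
`dPhi c y = y + log y + (log y - 1)/y + (-(log y)² + 4 log y + 6 - c)/(2y²)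
  + ((log y)² - 7 log y + c + 3)/y³`.
The derivative of `F₂` at `x` is therefore `dPhi 11.508 u - 2 * dPhi 10.667 v` with `u = log x`,
`v = log (x - n + 1)`. As `x > 2n`, one has `x < 2(x - n + 1)`, hence `u ≤ v + log 2`; and
`v ≥ log 16 > e` as `n ≥ 15`. Since `dPhi c y` is `y + log y` up to a small error, the difference is
about `log 2 - v - 2 log v + log u < 0`, and crude linear bounds based on
`1 ≤ log y ≤ y / e` suffice: `dPhi_upper` and `dPhi_lower`.
-/

open Real

/-- The common form of `G` (`c = 10.667`) and `H` (`c = 11.508`). -/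
noncomputable def cipolla (c x : ℝ) : ℝ :=
  x * (Real.log x + Real.log (Real.log x) - 1
    + (Real.log (Real.log x) - 2) / Real.log x
    - ((Real.log (Real.log x)) ^ 2 - 6 * Real.log (Real.log x) + c)
        / (2 * (Real.log x) ^ 2))

/-- The derivative of `cipolla c` at `x > 1`, as a function of `y = log x`. -/
noncomputable def dPhi (c y : ℝ) : ℝ :=
  y + Real.log y + (Real.log y - 1) / y
    + (-(Real.log y) ^ 2 + 4 * Real.log y + 6 - c) / (2 * y ^ 2)
    + ((Real.log y) ^ 2 - 7 * Real.log y + c + 3) / y ^ 3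

lemma hasDerivAt_cipolla (c : ℝ) {x : ℝ} (hx : 1 < x) :
    HasDerivAt (cipolla c) (dPhi c (Real.log x)) x := by
  have hx0 : x ≠ 0 := by positivity
  have hy : Real.log x ≠ 0 := (Real.log_pos hx).ne'
  have h1 := Real.hasDerivAt_log hx0
  have h2 := h1.log hy
  have h3 := (h2.sub_const 2).div h1 hy
  have h4 := (((h2.pow 2).sub (h2.const_mul 6)).add_const c).div ((h1.pow 2).const_mul 2)
    (by simpa using hy)
  have h5 := (hasDerivAt_id x).mul ((((h1.add h2).sub_const 1).add h3).sub h4)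
  refine h5.congr_deriv ?_
  simp only [dPhi, id, Pi.add_apply, Pi.sub_apply, Pi.div_apply, Pi.pow_apply]
  field_simp
  ring

/-- A rational weakening of the tangent-line bound `log y ≤ y / e`, as `10 / 27 > 1 / e`. -/
lemma log_le_div {y : ℝ} (hy : 0 < y) : Real.log y ≤ 10 / 27 * y := by
  have he := Real.exp_one_gt_d9
  have h := Real.log_le_sub_one_of_pos (div_pos hy (Real.exp_pos 1))
  rw [Real.log_div hy.ne' (Real.exp_pos 1).ne', Real.log_exp] at h
  have : y / Real.exp 1 ≤ 10 / 27 * y := by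
    rw [div_le_iff₀ (Real.exp_pos 1)]
    nlinarith
  linarith

lemma one_le_log {y : ℝ} (hy : 2.77 ≤ y) : 1 ≤ Real.log y := by
  rw [Real.le_log_iff_exp_le (by linarith)]
  have := Real.exp_one_lt_d9
  linarith

lemma dPhi_upper {y : ℝ} (hy : 2.77 ≤ y) : dPhi 11.508 y ≤ 1.38 * y + 0.9 := by
  have h0 : 0 < y := by linarith
  have hl := log_le_div h0
  have hl1 := one_le_log hy
  unfold dPhi
  set l := Real.log y
  have a1 : (l - 1) / y ≤ 0.38 := by
    rw [div_le_iff₀ h0]; linarith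
  have a2 : (-l ^ 2 + 4 * l + 6 - 11.508) / (2 * y ^ 2) ≤ 0 :=
    div_nonpos_of_nonpos_of_nonneg (by nlinarith [sq_nonneg (l - 2)]) (by positivity)
  have a3 : (l ^ 2 - 7 * l + 11.508 + 3) / y ^ 3 ≤ 0.49 := by
    rw [div_le_iff₀ (by positivity)]
    have b1 : (l - 1) ^ 2 ≤ (10 / 27 * y) ^ 2 := pow_le_pow_left₀ (by linarith) (by linarith) 2
    have b2 : 2.77 * y ^ 2 ≤ y ^ 3 := by nlinarith [sq_nonneg y]
    nlinarith
  linarith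

lemma dPhi_lower {y : ℝ} (hy : 2.77 ≤ y) : y + 0.8 ≤ dPhi 10.667 y := by
  have h0 : 0 < y := by linarith
  have hl := log_le_div h0
  have hl1 := one_le_log hy
  unfold dPhi
  set l := Real.log y
  have a1 : 0 ≤ (l - 1) / y := div_nonneg (by linarith) h0.le
  have a2 : -0.2 ≤ (-l ^ 2 + 4 * l + 6 - 10.667) / (2 * y ^ 2) := by
    rw [le_div_iff₀ (by positivity)]
    have b1 : (l - 1) ^ 2 ≤ (10 / 27 * y) ^ 2 := pow_le_pow_left₀ (by linarith) (by linarith) 2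
    nlinarith
  have a3 : 0 ≤ (l ^ 2 - 7 * l + 10.667 + 3) / y ^ 3 :=
    div_nonneg (by nlinarith [sq_nonneg (l - 3.5)]) (by positivity)
  linarith

theorem F2_strictAntiOn (n : ℕ) (hn : 15 ≤ n) :
    StrictAntiOn (fun x : ℝ => H x - 2 * G (x - n + 1))
      (Set.Ioo (2 * (n : ℝ)) (2.6 * (n : ℝ))) := by
  have hn' : (15 : ℝ) ≤ n := by exact_mod_cast hn
  have hd : ∀ x ∈ Set.Ioo (2 * (n : ℝ)) (2.6 * (n : ℝ)),
      HasDerivAt (fun x : ℝ => H x - 2 * G (x - n + 1))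
        (dPhi 11.508 (Real.log x) - 2 * dPhi 10.667 (Real.log (x - n + 1))) x := by
    intro x hx
    have hH : HasDerivAt H (dPhi 11.508 (Real.log x)) x :=
      hasDerivAt_cipolla 11.508 (by linarith [hx.1])
    have hG : HasDerivAt G (dPhi 10.667 (Real.log (x - n + 1))) (x - n + 1) :=
      hasDerivAt_cipolla 10.667 (by linarith [hx.1])
    have hs : HasDerivAt (fun x : ℝ => x - n + 1) 1 x :=
      ((hasDerivAt_id x).sub_const _).add_const _
    have hc := hG.comp x hs
    rw [mul_one] at hc
    exact hH.sub (hc.const_mul 2)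
  refine strictAntiOn_of_deriv_neg (convex_Ioo _ _)
    (fun x hx => (hd x hx).continuousAt.continuousWithinAt) ?_
  intro x hx
  rw [interior_Ioo] at hx
  rw [(hd x hx).deriv]
  have hx1 := hx.1
  have hz : 16 ≤ x - n + 1 := by linarith
  have hv : 2.77 ≤ Real.log (x - n + 1) := by
    have h16 : Real.log 16 = 4 * Real.log 2 := by
      rw [show (16 : ℝ) = 2 ^ 4 by norm_num, Real.log_pow]; norm_num
    have := Real.log_le_log (by norm_num) hz
    linarith [Real.log_two_gt_d9]
  have hvu : Real.log (x - n + 1) ≤ Real.log x :=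
    Real.log_le_log (by linarith) (by linarith)
  have huv : Real.log x ≤ Real.log 2 + Real.log (x - n + 1) := by
    rw [← Real.log_mul (by norm_num) (by linarith)]
    exact Real.log_le_log (by linarith) (by linarith)
  linarith [Real.log_two_lt_d9, dPhi_upper (hv.trans hvu), dPhi_lower hv]
end

section
/- Let γ(x) = (log 2 + (log 2)/(log x) + 0.565/(log x)²)/(log x + log log x − log 2 − (log 2)/(log x)) for real x ≥ 4. Then: (a) γ(x) > 0 for every x ≥ 8; (b) γ(x) < (log 2)/(log x) for every x ≥ 10734; (c) γ(x) < 1/4 for every x ≥ 10734. -/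
/-!
Write `L = log x` and `l = log 2`. After clearing denominators, `γ(x) < l / L` says
`l + 0.565 / L < l * (log L - l - l / L)`: the leading terms `l * L` cancel. Its left side decreases
and its right side increases in `L`, and it already holds for `L ≥ 9` using only `log L ≥ 3 l`
(about `0.76 < 0.91`). Since `10734 ≥ 2 ^ 13`, one has `L ≥ 13 l > 9`. The bound by `1 / 4` follows
from `l / L < 1 / 4`, and positivity for `x ≥ 8 = 2 ^ 3` from `log L ≥ l`.
-/

open Real

/-- The function `γ(x)` from (3.4). -/
noncomputable def gam (x : ℝ) : ℝ :=
  (Real.log 2 + Real.log 2 / Real.log x + 0.565 / (Real.log x) ^ 2)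
    / (Real.log x + Real.log (Real.log x) - Real.log 2 - Real.log 2 / Real.log x)

/-- The powers of two give all lower bounds on logarithms used below. -/
lemma mul_log_two_le (n : ℕ) {x : ℝ} (hx : (2 : ℝ) ^ n ≤ x) : n * Real.log 2 ≤ Real.log x := by
  rw [← Real.log_pow]
  exact Real.log_le_log (by positivity) hx

lemma gam_pos_of_eight_le {x : ℝ} (hx : 8 ≤ x) : 0 < gam x := by
  have h1 := Real.log_two_gt_d9
  have h2 := Real.log_two_lt_d9
  have hL : (3 : ℕ) * Real.log 2 ≤ Real.log x := mul_log_two_le 3 (by norm_num; exact hx)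
  push_cast at hL
  have hLL : (1 : ℕ) * Real.log 2 ≤ Real.log (Real.log x) := mul_log_two_le 1 (by linarith)
  push_cast at hLL
  have hpos : 0 < Real.log x := by linarith
  have hq : Real.log 2 / Real.log x ≤ 1 := by
    rw [div_le_one hpos]; linarith
  unfold gam
  apply div_pos
  · positivity
  · linarith

lemma nine_le_log {x : ℝ} (hx : 10734 ≤ x) : 9 ≤ Real.log x := by
  have h1 := Real.log_two_gt_d9
  have hL : (13 : ℕ) * Real.log 2 ≤ Real.log x := mul_log_two_le 13 (by norm_num; linarith)
  push_cast at hL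
  linarith

lemma gam_lt_log_two_div_log {x : ℝ} (hx : 10734 ≤ x) : gam x < Real.log 2 / Real.log x := by
  have h1 := Real.log_two_gt_d9
  have h2 := Real.log_two_lt_d9
  have hL := nine_le_log hx
  have hLL : (3 : ℕ) * Real.log 2 ≤ Real.log (Real.log x) :=
    mul_log_two_le 3 (by norm_num; linarith)
  push_cast at hLL
  have hpos : 0 < Real.log x := by linarith
  unfold gam
  generalize Real.log (Real.log x) = M at *
  generalize Real.log x = L at *
  generalize Real.log 2 = l at *
  have hq : l / L ≤ 0.08 := by
    rw [div_le_iff₀ hpos]; linarith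
  have hr : 0.565 / L ≤ 0.07 := by
    rw [div_le_iff₀ hpos]; linarith
  have hD : 0 < L + M - l - l / L := by linarith
  rw [div_lt_div_iff₀ hD hpos]
  have hnum : (l + l / L + 0.565 / L ^ 2) * L = l * L + l + 0.565 / L := by
    field_simp
  rw [hnum]
  -- The lower bound is `3 * 0.693 - 0.694 - 0.08 > 1.3`.
  have hE : 1.3 ≤ M - l - l / L := by linarith
  have hm : l * 1.3 ≤ l * (M - l - l / L) := mul_le_mul_of_nonneg_left hE (by linarith)
  linarith

theorem gam_properties :
    (∀ x : ℝ, 8 ≤ x → 0 < gam x) ∧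
    (∀ x : ℝ, 10734 ≤ x → gam x < Real.log 2 / Real.log x) ∧
    (∀ x : ℝ, 10734 ≤ x → gam x < 1 / 4) := by
  refine ⟨fun x hx => gam_pos_of_eight_le hx, fun x hx => gam_lt_log_two_div_log hx,
    fun x hx => (gam_lt_log_two_div_log hx).trans ?_⟩
  have h2 := Real.log_two_lt_d9
  have hL := nine_le_log hx
  rw [div_lt_iff₀ (by linarith)]
  linarith
end

section
/- Let δ(x) = (log 2 + (log 2)/(log x) − (1.472·log log x + 2.51)/(log x)²)/(log x + log log x − log 2 − (log 2)/(log x)) for real x ≥ 4. Then: (a) δ(x) > 0.638/(log x) for every x ≥ exp(exp(3)); (b) δ(x) < (log 2)/(log x) for every x ≥ 230. -/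
/-!
Put `y = log x`, `t = log y` and `a = log 2`. Once the denominator is known to be positive,
clearing denominators turns both inequalities into polynomial inequalities in `y`, `t`, `a`:

* (a) `(a - 0.638) y² + (1.638 a - 0.638 t) y - 1.472 t - 2.51 + 0.638 a > 0`;
* (b) `a (1 + a - t) y + a² - 1.472 t - 2.51 < 0`.

Each follows from the tangent line bound `log u ≤ u - 1`. For (a) it is applied at
`u = y / exp 3`, the endpoint of the range, where the inequality is nearly sharp; what remains is
a quadratic in `s = y / exp 3` which is positive and increasing on `s ≥ 1`. For (b) it is applied
at `u = 2e / y`, which gives `(1 + a - t) y ≤ 2e - y`, and then `y ≥ 4`, `t ≥ 1` suffice.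
-/

open Real

/-- The function `δ(x)` from (4.2). -/
noncomputable def del (x : ℝ) : ℝ :=
  (Real.log 2 + Real.log 2 / Real.log x
      - (1.472 * Real.log (Real.log x) + 2.51) / (Real.log x) ^ 2)
    / (Real.log x + Real.log (Real.log x) - Real.log 2 - Real.log 2 / Real.log x)

lemma del_denom_pos {y t : ℝ} (hy : 1 ≤ y) (ht : 1 ≤ t) :
    0 < y + t - Real.log 2 - Real.log 2 / y := by
  have ha := Real.log_two_lt_d9
  have ha0 := Real.log_two_gt_d9
  have h : Real.log 2 / y ≤ Real.log 2 := div_le_self (by linarith) hy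
  linarith

/-- Part (a) with denominators cleared. -/
lemma lower_poly {y : ℝ} (hy : Real.exp 3 ≤ y) :
    0 < (Real.log 2 - 0.638) * y ^ 2 + (1.638 * Real.log 2 - 0.638 * Real.log y) * y
      - 1.472 * Real.log y - 2.51 + 0.638 * Real.log 2 := by
  have ha := Real.log_two_lt_d9
  have ha0 := Real.log_two_gt_d9
  have he := Real.exp_one_gt_d9
  have he' := Real.exp_one_lt_d9
  have hE3 : Real.exp 3 = Real.exp 1 ^ 3 := by rw [← Real.exp_nat_mul]; norm_num
  have hE : 20.0855 < Real.exp 3 := by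
    rw [hE3]
    calc (20.0855 : ℝ) < 2.7182818283 ^ 3 := by norm_num
      _ ≤ _ := by gcongr
  have hE' : Real.exp 3 < 20.0856 := by
    rw [hE3]
    calc Real.exp 1 ^ 3 ≤ 2.7182818286 ^ 3 := by gcongr
      _ < _ := by norm_num
  have hE0 := Real.exp_pos 3
  have hy0 : 0 < y := hE0.trans_le hy
  have hlog : Real.log y ≤ 2 + y / Real.exp 3 := by
    have h := Real.log_le_sub_one_of_pos (div_pos hy0 hE0)
    rw [Real.log_div hy0.ne' hE0.ne', Real.log_exp] at h
    linarith
  obtain ⟨s, hs⟩ : ∃ s, s = y / Real.exp 3 := ⟨_, rfl⟩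
  have hs1 : 1 ≤ s := by rw [hs]; exact (one_le_div hE0).2 hy
  have hys : y = Real.exp 3 * s := by rw [hs]; field_simp
  rw [← hs] at hlog
  generalize Real.log y = t at *
  generalize Real.exp 3 = E at *
  generalize Real.log 2 = a at *
  have h1 : (0.638 * y + 1.472) * t ≤ (0.638 * y + 1.472) * (2 + s) := by gcongr
  have h2 : 0.0551471803 * y ^ 2 ≤ (a - 0.638) * y ^ 2 := by gcongr; linarith
  have h3 : 1.638 * 0.6931471803 * y ≤ 1.638 * a * y := by gcongr
  have h4 : 20.0855 * s ≤ y := by rw [hys]; gcongr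
  have h5 : y ≤ 20.0856 * s := by rw [hys]; gcongr
  have h6 : (20.0855 * s) ^ 2 ≤ y ^ 2 := by gcongr
  have h7 : y * s ≤ 20.0856 * s * s := by gcongr
  nlinarith [mul_nonneg (sub_nonneg.2 hs1) (sub_nonneg.2 hs1)]

/-- Part (b) with denominators cleared. -/
lemma upper_poly {y : ℝ} (hy : 4 ≤ y) (ht : 1 ≤ Real.log y) :
    Real.log 2 * (1 + Real.log 2 - Real.log y) * y + Real.log 2 ^ 2
      - 1.472 * Real.log y - 2.51 < 0 := by
  have ha := Real.log_two_lt_d9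
  have ha0 := Real.log_two_gt_d9
  have he' := Real.exp_one_lt_d9
  have hy0 : 0 < y := by linarith
  have he0 := Real.exp_pos 1
  have h := Real.log_le_sub_one_of_pos (div_pos (mul_pos two_pos he0) hy0)
  rw [Real.log_div (by positivity) hy0.ne', Real.log_mul two_ne_zero he0.ne', Real.log_exp] at h
  have h1 : (1 + Real.log 2 - Real.log y) * y ≤ 2 * Real.exp 1 - y := by
    calc _ ≤ (2 * Real.exp 1 / y - 1) * y :=
          mul_le_mul_of_nonneg_right (by linarith) hy0.le
      _ = _ := by field_simp
  have h2 : Real.log 2 * ((1 + Real.log 2 - Real.log y) * y) ≤ 0.6931471808 * 1.5 := by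
    calc _ ≤ Real.log 2 * 1.5 := by gcongr; linarith
      _ ≤ _ := by gcongr
  have h3 : Real.log 2 ^ 2 ≤ 0.6931471808 ^ 2 := by gcongr
  nlinarith

theorem del_properties :
    (∀ x : ℝ, Real.exp (Real.exp 3) ≤ x → 0.638 / Real.log x < del x) ∧
    (∀ x : ℝ, 230 ≤ x → del x < Real.log 2 / Real.log x) := by
  constructor
  · intro x hx
    have hx0 : 0 < x := (Real.exp_pos _).trans_le hx
    have hy : Real.exp 3 ≤ Real.log x := (Real.le_log_iff_exp_le hx0).2 hx
    have hy4 : 4 ≤ Real.log x := by linarith [Real.add_one_le_exp (3 : ℝ)]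
    have hy0 : 0 < Real.log x := by linarith
    have ht : 3 ≤ Real.log (Real.log x) := (Real.le_log_iff_exp_le hy0).2 hy
    have hp := lower_poly hy
    have hd := del_denom_pos (y := Real.log x) (t := Real.log (Real.log x))
      (by linarith) (by linarith)
    unfold del
    generalize Real.log (Real.log x) = t at *
    generalize Real.log x = y at *
    rw [div_lt_div_iff₀ hy0 hd, ← sub_pos]
    refine (div_pos hp hy0).trans_eq ?_
    field_simp
    ring
  · intro x hx
    have hx0 : 0 < x := by linarith
    have hy4 : 4 ≤ Real.log x := by
      rw [Real.le_log_iff_exp_le hx0]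
      have h : Real.exp 4 = Real.exp 1 ^ 4 := by rw [← Real.exp_nat_mul]; norm_num
      calc Real.exp 4 = Real.exp 1 ^ 4 := h
        _ ≤ 3 ^ 4 := by gcongr; linarith [Real.exp_one_lt_d9]
        _ ≤ x := by linarith
    have hy0 : 0 < Real.log x := by linarith
    have ht : 1 ≤ Real.log (Real.log x) := by
      rw [Real.le_log_iff_exp_le hy0]
      linarith [Real.exp_one_lt_d9]
    have hp := upper_poly hy4 ht
    have hd := del_denom_pos (y := Real.log x) (t := Real.log (Real.log x)) (by linarith) ht
    unfold del
    generalize Real.log (Real.log x) = t at *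
    generalize Real.log x = y at *
    rw [div_lt_div_iff₀ hd hy0, ← sub_neg]
    refine lt_of_eq_of_lt ?_ (div_neg_of_neg_of_pos hp hy0)
    field_simp
    ring
end
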